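/- Let R be a regular ring (i.e., R_p is a regular local ring for every prime p). Then the maps φ and ψ, defined by φ(X)(p) = max_{X∈X} pd_{R_p} X_p and ψ(f) = { M ∈ mod R : pd_{R_p} M_p ≤ f(p) for all p ∈ Spec R }, are mutually inverse bijections between the set of all resolving subcategories of mod R and the set of grade consistent functions on Spec R. -/

import Mathlib

universe u

open CategoryTheory

namespace ResolvPaper

variable (R : Type u) [CommRing R]

/-- `IsSES f g` means `0 → A → B → C → 0` is a short exact sequence. -/
def IsSES {R : Type u} [CommRing R] {A B C : Type u} [AddCommGroup A] [Module R A]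
    [AddCommGroup B] [Module R B] [AddCommGroup C] [Module R C]
    (f : A →ₗ[R] B) (g : B →ₗ[R] C) : Prop :=
  Function.Injective f ∧ Function.Surjective g ∧ LinearMap.range f = LinearMap.ker g

/-- A resolving subcategory of `mod R`, viewed as a set of bundled modules
closed under isomorphism, containing the finitely generated projective modules, and closed
under direct summands, extensions and syzygies. -/
structure IsResolving (𝒳 : Set (ModuleCat.{u} R)) : Prop where
  fg : ∀ M ∈ 𝒳, Module.Finite R M
  iso_closed : ∀ M N : ModuleCat.{u} R, Nonempty (M ≃ₗ[R] N) → M ∈ 𝒳 → N ∈ 𝒳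
  proj_mem : ∀ M : ModuleCat.{u} R, Module.Finite R M → Module.Projective R M → M ∈ 𝒳
  summand_closed : ∀ M N : ModuleCat.{u} R, ModuleCat.of R (↥M × ↥N) ∈ 𝒳 → M ∈ 𝒳
  ext_closed : ∀ (A B C : ModuleCat.{u} R) (f : A →ₗ[R] B) (g : B →ₗ[R] C),
    IsSES f g → A ∈ 𝒳 → C ∈ 𝒳 → B ∈ 𝒳
  syzygy_closed : ∀ (K P M : ModuleCat.{u} R) (f : K →ₗ[R] P) (g : P →ₗ[R] M),
    IsSES f g → Module.Finite R K → Module.Finite R P → Module.Projective R P →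
    M ∈ 𝒳 → K ∈ 𝒳

/-- The resolving closure: the smallest resolving subcategory containing `S`. -/
def resClosure (S : Set (ModuleCat.{u} R)) : Set (ModuleCat.{u} R) :=
  ⋂₀ {𝒳 | IsResolving R 𝒳 ∧ S ⊆ 𝒳}

/-- An extension-closed subcategory of `mod R`: closed under isomorphism,
direct summands and extensions. -/
def IsExtClosed (𝒳 : Set (ModuleCat.{u} R)) : Prop :=
  (∀ M N : ModuleCat.{u} R, Nonempty (M ≃ₗ[R] N) → M ∈ 𝒳 → N ∈ 𝒳) ∧
  (∀ M N : ModuleCat.{u} R, ModuleCat.of R (↥M × ↥N) ∈ 𝒳 → M ∈ 𝒳) ∧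
  (∀ (A B C : ModuleCat.{u} R) (f : A →ₗ[R] B) (g : B →ₗ[R] C),
    IsSES f g → A ∈ 𝒳 → C ∈ 𝒳 → B ∈ 𝒳)

/-- The extension closure of a set of modules. -/
def extClosure (S : Set (ModuleCat.{u} R)) : Set (ModuleCat.{u} R) :=
  ⋂₀ {𝒳 | IsExtClosed R 𝒳 ∧ S ⊆ 𝒳}

/-- `add R`: direct summands of finite free modules. -/
def addR : Set (ModuleCat.{u} R) :=
  {M | ∃ (n : ℕ) (N : ModuleCat.{u} R), Nonempty ((↥M × ↥N) ≃ₗ[R] (Fin n → R))}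

/-- `pdLE n M` : the projective dimension of `M` is at most `n`. -/
def pdLE : ℕ → ModuleCat.{u} R → Prop
  | 0, M => Module.Projective R M
  | n+1, M => ∃ (K P : ModuleCat.{u} R) (f : K →ₗ[R] P) (g : P →ₗ[R] M),
      Module.Finite R P ∧ Module.Projective R P ∧ IsSES f g ∧ pdLE n K

/-- The projective dimension, an element of `WithBot ℕ∞`; the zero module
has projective dimension `⊥ = -∞`. -/
noncomputable def pdim (M : ModuleCat.{u} R) : WithBot ℕ∞ :=
  sInf {x : WithBot ℕ∞ | (x = ⊥ ∧ Subsingleton M) ∨ ∃ n : ℕ, x = (n : ℕ∞) ∧ pdLE R n M}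

/-- The depth of `M` with respect to the ideal `I`: the supremum of lengths of weakly
`M`-regular sequences contained in `I`.  The zero module has depth `∞`. -/
noncomputable def depthE (I : Ideal R) (M : Type u) [AddCommGroup M] [Module R M] : ℕ∞ :=
  sSup {x : ℕ∞ | ∃ rs : List R, (∀ r ∈ rs, r ∈ I) ∧
    RingTheory.Sequence.IsWeaklyRegular M rs ∧ x = rs.length}

/-- The grade of an ideal: the length of a maximal `R`-regular sequence in `I`. -/
noncomputable def gradeE (I : Ideal R) : ℕ∞ := depthE R I R

/-- A grade consistent function on `Spec R`. -/
def GradeConsistent (f : PrimeSpectrum R → ℕ) : Prop :=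
  (∀ p : PrimeSpectrum R, (f p : ℕ∞) ≤ gradeE R p.asIdeal) ∧
  (∀ p q : PrimeSpectrum R, p.asIdeal ≤ q.asIdeal → f p ≤ f q)

/-- The localization of a module at a prime, as a module over the local ring `R_p`. -/
noncomputable abbrev localizeM (p : PrimeSpectrum R) (M : ModuleCat.{u} R) :
    ModuleCat.{u} (Localization.AtPrime p.asIdeal) :=
  ModuleCat.of (Localization.AtPrime p.asIdeal) (LocalizedModule p.asIdeal.primeCompl M)

/-- `pd_{R_p} M_p`. -/
noncomputable def localPdim (p : PrimeSpectrum R) (M : ModuleCat.{u} R) : WithBot ℕ∞ :=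
  pdim (Localization.AtPrime p.asIdeal) (localizeM R p M)

/-- `depth_{R_p} M_p`. -/
noncomputable def localDepth (p : PrimeSpectrum R) (M : ModuleCat.{u} R) : ℕ∞ :=
  depthE (Localization.AtPrime p.asIdeal)
    (IsLocalRing.maximalIdeal (Localization.AtPrime p.asIdeal))
    (LocalizedModule p.asIdeal.primeCompl M)

/-- The height of a prime ideal. -/
noncomputable def heightE (p : PrimeSpectrum R) : ℕ∞ := Order.height p

/-- `PD(R)` : finitely generated modules of finite projective dimension. -/
def PDcat : Set (ModuleCat.{u} R) :=
  {M | Module.Finite R M ∧ ∃ n : ℕ, pdLE R n M}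

/-- `MCM(R)` : maximal Cohen-Macaulay modules. -/
def MCMcat : Set (ModuleCat.{u} R) :=
  {M | Module.Finite R M ∧ ∀ p : PrimeSpectrum R, heightE R p ≤ localDepth R p M}

/-- The nonfree locus of a module. -/
def NF (M : ModuleCat.{u} R) : Set (PrimeSpectrum R) :=
  {p | ¬ Module.Free (Localization.AtPrime p.asIdeal) (LocalizedModule p.asIdeal.primeCompl M)}

/-- The infinite projective dimension locus of a module. -/
def IPD (M : ModuleCat.{u} R) : Set (PrimeSpectrum R) :=
  {p | localPdim R p M = (⊤ : WithBot ℕ∞)}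

/-- The infinite projective dimension locus of a collection of modules. -/
def IPDcat (𝒳 : Set (ModuleCat.{u} R)) : Set (PrimeSpectrum R) :=
  ⋃ M ∈ 𝒳, IPD R M

/-- The modules in `mod R` whose infinite projective dimension locus lies in `W`. -/
def IPDinv (W : Set (PrimeSpectrum R)) : Set (ModuleCat.{u} R) :=
  {M | Module.Finite R M ∧ IPD R M ⊆ W}

/-- A specialization closed subset of `Spec R`. -/
def SpecClosed (W : Set (PrimeSpectrum R)) : Prop :=
  ∀ p ∈ W, ∀ q : PrimeSpectrum R, p.asIdeal ≤ q.asIdeal → q ∈ W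

/-- Membership in `add 𝒳_p`: direct summands of localizations of finite direct sums
of members of `𝒳`. -/
def memAddLocal (𝒳 : Set (ModuleCat.{u} R)) (p : PrimeSpectrum R)
    (N : ModuleCat.{u} (Localization.AtPrime p.asIdeal)) : Prop :=
  ∃ (n : ℕ) (X : Fin n → ModuleCat.{u} R), (∀ i, X i ∈ 𝒳) ∧
    ∃ (N' : ModuleCat.{u} (Localization.AtPrime p.asIdeal)),
      Nonempty ((↥N × ↥N') ≃ₗ[Localization.AtPrime p.asIdeal]
        ((i : Fin n) → LocalizedModule p.asIdeal.primeCompl (X i)))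

/-- `K` is an `n`-th syzygy of `M` computed from a minimal free resolution over the
local ring `S`. -/
def IsMinSyz (S : Type u) [CommRing S] [IsLocalRing S] :
    ℕ → ModuleCat.{u} S → ModuleCat.{u} S → Prop
  | 0, M, K => Nonempty (K ≃ₗ[S] M)
  | n+1, M, K => ∃ (F : ModuleCat.{u} S) (g : F →ₗ[S] M) (K' : ModuleCat.{u} S)
      (i : K' →ₗ[S] F),
      Module.Finite S F ∧ Module.Free S F ∧ Function.Surjective g ∧
      (LinearMap.ker g ≤ (IsLocalRing.maximalIdeal S) • (⊤ : Submodule S F)) ∧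
      Function.Injective i ∧ LinearMap.range i = LinearMap.ker g ∧
      IsMinSyz S n K' K

/-- `K` is an `n`-th syzygy of `M` in some projective resolution (over any ring). -/
def IsSyz : ℕ → ModuleCat.{u} R → ModuleCat.{u} R → Prop
  | 0, M, K => Nonempty (K ≃ₗ[R] M)
  | n+1, M, K => ∃ (F : ModuleCat.{u} R) (g : F →ₗ[R] M) (K' : ModuleCat.{u} R)
      (i : K' →ₗ[R] F),
      Module.Finite R F ∧ Module.Projective R F ∧ Function.Surjective g ∧
      Function.Injective i ∧ LinearMap.range i = LinearMap.ker g ∧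
      IsSyz n K' K

/-- `T` is (isomorphic to) the Auslander transpose of `M`, computed from a minimal
free presentation over the local ring `S`. -/
def IsTranspose (S : Type u) [CommRing S] [IsLocalRing S] (M T : ModuleCat.{u} S) : Prop :=
  ∃ (F1 F0 : ModuleCat.{u} S) (d : F1 →ₗ[S] F0) (e : F0 →ₗ[S] M),
    Module.Finite S F0 ∧ Module.Free S F0 ∧ Module.Finite S F1 ∧ Module.Free S F1 ∧
    Function.Surjective e ∧ LinearMap.range d = LinearMap.ker e ∧
    LinearMap.ker e ≤ (IsLocalRing.maximalIdeal S) • (⊤ : Submodule S F0) ∧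
    LinearMap.ker d ≤ (IsLocalRing.maximalIdeal S) • (⊤ : Submodule S F1) ∧
    Nonempty (T ≃ₗ[S] ((Module.Dual S F1) ⧸ LinearMap.range d.dualMap))

/-- `T` is (isomorphic to) `Tr Ω^n M` over the local ring `S`. -/
def IsTrOmega (S : Type u) [CommRing S] [IsLocalRing S] (n : ℕ) (M T : ModuleCat.{u} S) :
    Prop :=
  ∃ K : ModuleCat.{u} S, IsMinSyz S n M K ∧ IsTranspose S K T

/-- Resolving subcategory `𝒳` is dominant on `W ⊆ Spec R`. -/
def DominantOn (𝒳 : Set (ModuleCat.{u} R)) (W : Set (PrimeSpectrum R)) : Prop :=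
  ∀ p ∈ W, ∃ (n : ℕ) (K : ModuleCat.{u} (Localization.AtPrime p.asIdeal)),
    IsMinSyz (Localization.AtPrime p.asIdeal) n
      (ModuleCat.of (Localization.AtPrime p.asIdeal)
        (IsLocalRing.ResidueField (Localization.AtPrime p.asIdeal))) K ∧
    memAddLocal R 𝒳 p K

/-- Dominant resolving subcategory. -/
def Dominant (𝒳 : Set (ModuleCat.{u} R)) : Prop := DominantOn R 𝒳 Set.univ

/-- A (noetherian) local ring is Cohen-Macaulay if its depth equals its Krull dimension. -/
def IsCMLocalRing (S : Type u) [CommRing S] [IsLocalRing S] : Prop :=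
  IsNoetherianRing S ∧
    ((depthE S (IsLocalRing.maximalIdeal S) S : WithBot ℕ∞) = ringKrullDim S)

/-- A regular local ring: a noetherian local ring whose maximal ideal is generated by
`dim S` elements. -/
def IsRegLocalRing (S : Type u) [CommRing S] [IsLocalRing S] : Prop :=
  IsNoetherianRing S ∧ ∃ s : Finset S,
    Ideal.span (s : Set S) = IsLocalRing.maximalIdeal S ∧
    ringKrullDim S = (s.card : WithBot ℕ∞)

/-- The singular locus of `R`. -/
def SingLocus : Set (PrimeSpectrum R) :=
  {p | ¬ IsRegLocalRing (Localization.AtPrime p.asIdeal)}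

/-- A hypersurface local ring: the completion is a quotient of a regular local ring by
one element. -/
def IsHypersurfaceLocalRing (S : Type u) [CommRing S] [IsLocalRing S] : Prop :=
  ∃ (T : Type u) (_ : CommRing T) (_ : IsLocalRing T) (f : T),
    IsRegLocalRing T ∧
    Nonempty ((AdicCompletion (IsLocalRing.maximalIdeal S) S) ≃+* (T ⧸ Ideal.span {f}))

/-- A complete intersection local ring: the completion is a quotient of a regular local
ring by a regular sequence. -/
def IsCompleteIntersectionLocalRing (S : Type u) [CommRing S] [IsLocalRing S] : Prop :=
  ∃ (T : Type u) (_ : CommRing T) (_ : IsLocalRing T) (rs : List T),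
    IsRegLocalRing T ∧ RingTheory.Sequence.IsRegular T rs ∧
    Nonempty ((AdicCompletion (IsLocalRing.maximalIdeal S) S) ≃+*
      (T ⧸ Ideal.ofList rs))

/-- The subquotient `A / (A ⊓ B)` of two submodules, used for homology. -/
def subquot {S M : Type u} [CommRing S] [AddCommGroup M] [Module S M]
    (A B : Submodule S M) : Type u :=
  A ⧸ (B.comap A.subtype)

noncomputable instance {S M : Type u} [CommRing S] [AddCommGroup M] [Module S M]
    (A B : Submodule S M) : AddCommGroup (subquot A B) :=
  inferInstanceAs (AddCommGroup (A ⧸ (B.comap A.subtype)))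

noncomputable instance {S M : Type u} [CommRing S] [AddCommGroup M] [Module S M]
    (A B : Submodule S M) : Module S (subquot A B) :=
  inferInstanceAs (Module S (A ⧸ (B.comap A.subtype)))

/-- `E` is (isomorphic to) `Ext^{j+1}_S(M, S)`, computed from a finite free resolution. -/
def IsExtPos (S : Type u) [CommRing S] (j : ℕ) (M E : ModuleCat.{u} S) : Prop :=
  ∃ (F : ℕ → ModuleCat.{u} S) (d : ∀ i : ℕ, (F (i+1) : Type u) →ₗ[S] F i)
    (e : (F 0 : Type u) →ₗ[S] M),
    (∀ i, Module.Finite S (F i)) ∧ (∀ i, Module.Free S (F i)) ∧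
    Function.Surjective e ∧ LinearMap.range (d 0) = LinearMap.ker e ∧
    (∀ i, LinearMap.range (d (i+1)) = LinearMap.ker (d i)) ∧
    Nonempty (E ≃ₗ[S]
      subquot (LinearMap.ker ((d (j+1)).dualMap)) (LinearMap.range ((d j).dualMap)))

/-- `T` is (isomorphic to) `Tor_n^S(M, N)`, computed from a projective resolution of `M`. -/
def IsTor (S : Type u) [CommRing S] (n : ℕ) (M N T : ModuleCat.{u} S) : Prop :=
  ∃ (F : ℕ → ModuleCat.{u} S) (d : ∀ i : ℕ, (F (i+1) : Type u) →ₗ[S] F i)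
    (e : (F 0 : Type u) →ₗ[S] M),
    (∀ i, Module.Projective S (F i)) ∧
    Function.Surjective e ∧ LinearMap.range (d 0) = LinearMap.ker e ∧
    (∀ i, LinearMap.range (d (i+1)) = LinearMap.ker (d i)) ∧
    (match n with
      | 0 => Nonempty (T ≃ₗ[S] TensorProduct S M N)
      | (j+1) => Nonempty (T ≃ₗ[S]
          subquot (LinearMap.ker (LinearMap.rTensor (↥N) (d j)))
            (LinearMap.range (LinearMap.rTensor (↥N) (d (j+1))))))

/-- `idLE n M` : the injective dimension of `M` is at most `n`. -/
def idLE (S : Type u) [CommRing S] : ℕ → ModuleCat.{u} S → Prop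
  | 0, M => Module.Injective S M
  | n+1, M => ∃ (I C : ModuleCat.{u} S) (f : M →ₗ[S] I) (g : I →ₗ[S] C),
      IsSES f g ∧ Module.Injective S I ∧ idLE S n C

/-- `PD_0^n(R)` over a local ring: modules of projective dimension at most `n` that are
free on the punctured spectrum. -/
def PD0n [IsLocalRing R] (n : ℕ) : Set (ModuleCat.{u} R) :=
  {M | Module.Finite R M ∧ pdLE R n M ∧
    ∀ p : PrimeSpectrum R, p.asIdeal ≠ IsLocalRing.maximalIdeal R →
      Module.Free (Localization.AtPrime p.asIdeal) (LocalizedModule p.asIdeal.primeCompl M)}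

/-- `PD_0(R)` over a local ring: modules of finite projective dimension that are
free on the punctured spectrum. -/
def PD0 [IsLocalRing R] : Set (ModuleCat.{u} R) :=
  {M | Module.Finite R M ∧ (∃ n : ℕ, pdLE R n M) ∧
    ∀ p : PrimeSpectrum R, p.asIdeal ≠ IsLocalRing.maximalIdeal R →
      Module.Free (Localization.AtPrime p.asIdeal) (LocalizedModule p.asIdeal.primeCompl M)}

/-- The residue field of a local ring, as a bundled module. -/
noncomputable abbrev residueMod (S : Type u) [CommRing S] [IsLocalRing S] : ModuleCat.{u} S :=
  ModuleCat.of S (IsLocalRing.ResidueField S)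


/-- The map `ψ` sending a grade consistent function to a subcategory of `PD(R)`. -/
def psiPd (f : PrimeSpectrum R → ℕ) : Set (ModuleCat.{u} R) :=
  {M | Module.Finite R M ∧
    ∀ p : PrimeSpectrum R, localPdim R p M ≤ ((f p : ℕ∞) : WithBot ℕ∞)}

/-!
Multiplying the extension `0 → ker π → F → M → 0` given by a free cover `π` of `M` by a scalar `x`
produces a module `E` that lies in every resolving subcategory containing `M`, has the same
projective dimension as `M` at the primes containing `x`, and is projective where `x` is
invertible. Doing this for generators of an ideal `I` concentrates `M` on `V(I)` at no cost.
Conversely, if `x` acts on `M` through some module of a resolving subcategory `𝒳` and `E ∈ 𝒳`, then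
`M` is a retract of an extension of members of `𝒳`, so `M ∈ 𝒳`.

Over a regular local ring, the projective dimension alone decides which modules that are free on the
punctured spectrum lie in a given resolving subcategory. This is an induction on the dimension,
dividing by a regular parameter; when the dimension of the ring is attained, torsion of finite
length supplies the residue field, and with it all modules of finite length.

To put `M` into `𝒳` when at each prime some member of `𝒳` has at least the projective dimension of
`M`, take a minimal prime `p` of the nonfree locus of `M`. The local statement at `p`, applied to a
member of `𝒳` concentrated on `V(p)`, shows that some `t ∉ p` acts on `M` through a member of `𝒳`,
which reduces the question for `M` to the one for `E` with `x = t`, whose nonfree locus is smaller;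
noetherian induction finishes. So `𝒳` is recovered from its maximal local projective dimensions.

These are bounded by the grade: an associated prime `q ⊇ p` of the quotient of the ring by a maximal
regular sequence in `p` is such that the local ring at `q` has dimension at most the grade of `p`.
Every grade consistent `f` is attained at `p` by concentrating on `V(p)` the quotient of the ring by
a regular sequence of length `f p` in `p`.
-/

section ShortExact

variable {A : Type u} [CommRing A] {K P M K' P' M' F : Type u}
  [AddCommGroup K] [Module A K] [AddCommGroup P] [Module A P] [AddCommGroup M] [Module A M]
  [AddCommGroup K'] [Module A K'] [AddCommGroup P'] [Module A P'] [AddCommGroup M'] [Module A M']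
  [AddCommGroup F] [Module A F]

lemma IsSES.exact {f : K →ₗ[A] P} {g : P →ₗ[A] M} (h : IsSES f g) : Function.Exact f g :=
  LinearMap.exact_iff.2 h.2.2.symm

lemma isSES_of_exact {f : K →ₗ[A] P} {g : P →ₗ[A] M} (hf : Function.Injective f)
    (hg : Function.Surjective g) (h : Function.Exact f g) : IsSES f g :=
  ⟨hf, hg, (LinearMap.exact_iff.1 h).symm⟩

lemma isSES_ker_subtype {g : P →ₗ[A] M} (hg : Function.Surjective g) :
    IsSES (LinearMap.ker g).subtype g :=
  ⟨Subtype.val_injective, hg, Submodule.range_subtype _⟩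

lemma isSES_inl_snd : IsSES (LinearMap.inl A K M) (LinearMap.snd A K M) :=
  ⟨LinearMap.inl_injective, LinearMap.snd_surjective, LinearMap.range_inl A K M⟩

lemma IsSES.prodMap {f : K →ₗ[A] P} {g : P →ₗ[A] M} {f' : K' →ₗ[A] P'} {g' : P' →ₗ[A] M'}
    (h : IsSES f g) (h' : IsSES f' g') : IsSES (f.prodMap f') (g.prodMap g') :=
  ⟨h.1.prodMap h'.1, h.2.1.prodMap h'.2.1, by
    rw [LinearMap.range_prodMap, LinearMap.ker_prodMap, h.2.2, h'.2.2]⟩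

lemma IsSES.shortExact {f : K →ₗ[A] P} {g : P →ₗ[A] M} (h : IsSES f g) :
    (ShortComplex.mk (ModuleCat.ofHom f) (ModuleCat.ofHom g)
      (ModuleCat.hom_ext h.exact.linearMap_comp_eq_zero)).ShortExact where
  exact := (ShortComplex.ShortExact.moduleCat_exact_iff_function_exact _).2 h.exact
  mono_f := (ModuleCat.mono_iff_injective _).2 h.1
  epi_g := (ModuleCat.epi_iff_surjective _).2 h.2.1

/-- The left end of a short exact sequence, as a kernel. -/
noncomputable def IsSES.kerEquiv {f : K →ₗ[A] P} {g : P →ₗ[A] M} (h : IsSES f g) :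
    K ≃ₗ[A] LinearMap.ker g :=
  (LinearEquiv.ofInjective f h.1).trans (LinearEquiv.ofEq _ _ h.2.2)

/-- A retract is a direct summand, with the kernel of the retraction as complement. -/
noncomputable def retractEquiv {i : M →ₗ[A] P} {r : P →ₗ[A] M} (hr : r ∘ₗ i = LinearMap.id) :
    P ≃ₗ[A] M × LinearMap.ker r :=
  (lequivProdOfRightSplitExact (LinearMap.ker r).injective_subtype
    (Submodule.range_subtype _) hr).symm.trans (LinearEquiv.prodComm A _ _)

/-- The fibre product of two linear maps, as a submodule of the product. -/
def pullback (f : P →ₗ[A] M) (g : F →ₗ[A] M) : Submodule A (P × F) :=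
  LinearMap.ker (f.coprod (-g))

/-- The first projection of a fibre product. -/
def pullbackFst (f : P →ₗ[A] M) (g : F →ₗ[A] M) : pullback f g →ₗ[A] P :=
  LinearMap.fst A P F ∘ₗ (pullback f g).subtype

/-- The second projection of a fibre product. -/
def pullbackSnd (f : P →ₗ[A] M) (g : F →ₗ[A] M) : pullback f g →ₗ[A] F :=
  LinearMap.snd A P F ∘ₗ (pullback f g).subtype

variable {f : P →ₗ[A] M} {g : F →ₗ[A] M}

@[simp]
lemma mem_pullback {z : P × F} : z ∈ pullback f g ↔ f z.1 = g z.2 := by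
  simp [pullback, add_neg_eq_zero]

/-- The kernel of `g`, embedded in the fibre product of `f` and `g`. -/
def pullbackInr (f : P →ₗ[A] M) (g : F →ₗ[A] M) : LinearMap.ker g →ₗ[A] pullback f g :=
  (LinearMap.inr A P F).restrict fun k hk => by simpa using (LinearMap.mem_ker.1 hk).symm

/-- The kernel of `f`, embedded in the fibre product of `f` and `g`. -/
def pullbackInl (f : P →ₗ[A] M) (g : F →ₗ[A] M) : LinearMap.ker f →ₗ[A] pullback f g :=
  (LinearMap.inl A P F).restrict fun k hk => by simpa using hk

lemma isSES_pullbackFst (f : P →ₗ[A] M) (hg : Function.Surjective g) :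
    IsSES (pullbackInr f g) (pullbackFst f g) := by
  refine isSES_of_exact (fun a b h => Subtype.ext (congrArg (fun z => z.1.2) h)) (fun m => ?_) ?_
  · obtain ⟨v, hv⟩ := hg (f m)
    exact ⟨⟨(m, v), mem_pullback.2 hv.symm⟩, rfl⟩
  · rintro ⟨⟨m, v⟩, hz⟩
    refine ⟨fun (h : m = 0) => ?_, ?_⟩
    · subst h
      exact ⟨⟨v, by simpa using (mem_pullback.1 hz).symm⟩, rfl⟩
    · rintro ⟨k, hk⟩
      exact (congrArg (fun z => z.1.1) hk).symm

lemma isSES_pullbackSnd (hf : Function.Surjective f) (g : F →ₗ[A] M) :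
    IsSES (pullbackInl f g) (pullbackSnd f g) := by
  refine isSES_of_exact (fun a b h => Subtype.ext (congrArg (fun z => z.1.1) h)) (fun v => ?_) ?_
  · obtain ⟨m, hm⟩ := hf (g v)
    exact ⟨⟨(m, v), mem_pullback.2 hm⟩, rfl⟩
  · rintro ⟨⟨m, v⟩, hz⟩
    refine ⟨fun (h : v = 0) => ?_, ?_⟩
    · subst h
      exact ⟨⟨m, by simpa using mem_pullback.1 hz⟩, rfl⟩
    · rintro ⟨k, hk⟩
      exact (congrArg (fun z => z.1.2) hk).symm

lemma isSES_ker_comp (π : F →ₗ[A] P) (hπ : Function.Surjective π) (g : P →ₗ[A] M) :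
    IsSES (Submodule.inclusion (LinearMap.ker_le_ker_comp π g))
      (π.restrict (p := LinearMap.ker (g ∘ₗ π)) (q := LinearMap.ker g) fun _ h => h) := by
  refine isSES_of_exact (Submodule.inclusion_injective _) ?_ ?_
  · rintro ⟨p, hp⟩
    obtain ⟨v, rfl⟩ := hπ p
    exact ⟨⟨v, hp⟩, rfl⟩
  · rintro ⟨v, hv⟩
    refine ⟨fun h => ⟨⟨v, congrArg Subtype.val h⟩, rfl⟩, ?_⟩
    rintro ⟨k, hk⟩
    obtain rfl : k.1 = v := congrArg Subtype.val hk
    exact Subtype.ext k.2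

end ShortExact

section Closed

variable {A : Type u} [CommRing A] {K P M N F : Type u} [AddCommGroup K] [Module A K]
  [AddCommGroup P] [Module A P] [AddCommGroup M] [Module A M] [AddCommGroup N] [Module A N]
  [AddCommGroup F] [Module A F] {𝒳 : Set (ModuleCat.{u} A)}

namespace IsExtClosed

lemma mem_of_equiv (h : IsExtClosed A 𝒳) (e : M ≃ₗ[A] N) (hM : ModuleCat.of A M ∈ 𝒳) :
    ModuleCat.of A N ∈ 𝒳 :=
  h.1 (ModuleCat.of A M) (ModuleCat.of A N) ⟨e⟩ hM

lemma mem_of_isSES (h : IsExtClosed A 𝒳) {f : K →ₗ[A] P} {g : P →ₗ[A] M} (hs : IsSES f g)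
    (hK : ModuleCat.of A K ∈ 𝒳) (hM : ModuleCat.of A M ∈ 𝒳) : ModuleCat.of A P ∈ 𝒳 :=
  h.2.2 (ModuleCat.of A K) (ModuleCat.of A P) (ModuleCat.of A M) f g hs hK hM

lemma mem_of_prod (h : IsExtClosed A 𝒳) (hMN : ModuleCat.of A (M × N) ∈ 𝒳) :
    ModuleCat.of A M ∈ 𝒳 :=
  h.2.1 (ModuleCat.of A M) (ModuleCat.of A N) hMN

lemma mem_of_retract (h : IsExtClosed A 𝒳) (i : M →ₗ[A] N) (r : N →ₗ[A] M)
    (hr : r ∘ₗ i = LinearMap.id) (hN : ModuleCat.of A N ∈ 𝒳) : ModuleCat.of A M ∈ 𝒳 :=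
  h.mem_of_prod (h.mem_of_equiv (retractEquiv hr) hN)

lemma prod_mem (h : IsExtClosed A 𝒳) (hM : ModuleCat.of A M ∈ 𝒳) (hN : ModuleCat.of A N ∈ 𝒳) :
    ModuleCat.of A (M × N) ∈ 𝒳 :=
  h.mem_of_isSES isSES_inl_snd hM hN

lemma pi_mem (h : IsExtClosed A 𝒳) (hM : ModuleCat.of A M ∈ 𝒳) (n : ℕ) :
    ModuleCat.of A (Fin n → M) ∈ 𝒳 := by
  induction n with
  | zero => exact h.mem_of_retract 0 0 (Subsingleton.elim _ _) hM
  | succ n ih => exact h.mem_of_equiv (Fin.consLinearEquiv A fun _ => M) (h.prod_mem hM ih)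

/-- Schanuel's lemma. -/
lemma ker_mem [Module.Projective A F] (h : IsExtClosed A 𝒳) {g : P →ₗ[A] M}
    (hg : Function.Surjective g) (hP : ModuleCat.of A P ∈ 𝒳) {π : F →ₗ[A] M}
    (hπ : Function.Surjective π) (hK : ModuleCat.of A (LinearMap.ker π) ∈ 𝒳) :
    ModuleCat.of A (LinearMap.ker g) ∈ 𝒳 := by
  have hs := isSES_pullbackSnd hg π
  obtain ⟨σ, hσ⟩ := Module.projective_lifting_property (pullbackSnd g π) LinearMap.id hs.2.1
  exact h.mem_of_prod (h.mem_of_equiv (lequivProdOfRightSplitExact hs.1 hs.2.2 hσ).symm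
    (h.mem_of_isSES (isSES_pullbackFst g hπ) hK hP))

lemma of_projective_mem (h : IsExtClosed A 𝒳) (hA : ModuleCat.of A A ∈ 𝒳) (P : Type u)
    [AddCommGroup P] [Module A P] [Module.Finite A P] [Module.Projective A P] :
    ModuleCat.of A P ∈ 𝒳 := by
  obtain ⟨n, f, s, -, -, hs⟩ := Module.Finite.exists_comp_eq_id_of_projective A P
  exact h.mem_of_retract s f hs (h.pi_mem hA n)

lemma isResolving (h : IsExtClosed A 𝒳) (hfg : ∀ M ∈ 𝒳, Module.Finite A M)
    (hA : ModuleCat.of A A ∈ 𝒳)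
    (hsyz : ∀ M ∈ 𝒳, ∃ (n : ℕ) (π : (Fin n → A) →ₗ[A] M), Function.Surjective π ∧
      ModuleCat.of A (LinearMap.ker π) ∈ 𝒳) : IsResolving A 𝒳 where
  fg := hfg
  iso_closed := h.1
  proj_mem P _ _ := h.of_projective_mem hA P
  summand_closed := h.2.1
  ext_closed := h.2.2
  syzygy_closed K P M f g hs _ _ _ hM := by
    obtain ⟨n, π, hπ, hK⟩ := hsyz M hM
    exact h.mem_of_equiv hs.kerEquiv.symm
      (h.ker_mem hs.2.1 (h.of_projective_mem hA P) hπ hK)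

end IsExtClosed

namespace IsResolving

lemma isExtClosed (h : IsResolving A 𝒳) : IsExtClosed A 𝒳 :=
  ⟨h.iso_closed, h.summand_closed, h.ext_closed⟩

lemma finite (h : IsResolving A 𝒳) (hM : ModuleCat.of A M ∈ 𝒳) : Module.Finite A M :=
  h.fg _ hM

lemma of_projective_mem (h : IsResolving A 𝒳) (P : Type u) [AddCommGroup P] [Module A P]
    [Module.Finite A P] [Module.Projective A P] : ModuleCat.of A P ∈ 𝒳 :=
  h.proj_mem (ModuleCat.of A P) ‹_› ‹_›

lemma ker_mem_of_projective [IsNoetherianRing A] [Module.Finite A F] [Module.Projective A F]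
    (h : IsResolving A 𝒳) {π : F →ₗ[A] M} (hπ : Function.Surjective π)
    (hM : ModuleCat.of A M ∈ 𝒳) : ModuleCat.of A (LinearMap.ker π) ∈ 𝒳 :=
  h.syzygy_closed (ModuleCat.of A (LinearMap.ker π)) (ModuleCat.of A F) (ModuleCat.of A M) _ π
    (isSES_ker_subtype hπ) inferInstance ‹_› ‹_› hM

lemma ker_mem [IsNoetherianRing A] (h : IsResolving A 𝒳) {g : P →ₗ[A] M}
    (hg : Function.Surjective g) (hP : ModuleCat.of A P ∈ 𝒳) (hM : ModuleCat.of A M ∈ 𝒳) :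
    ModuleCat.of A (LinearMap.ker g) ∈ 𝒳 := by
  have := h.finite hM
  obtain ⟨n, π, hπ⟩ := Module.Finite.exists_fin' A M
  exact h.isExtClosed.ker_mem hg hP hπ (h.ker_mem_of_projective hπ hM)

end IsResolving

end Closed

section StableAnnihilator

variable {A : Type u} [CommRing A] {K P M N F X Y : Type u} [AddCommGroup K] [Module A K]
  [AddCommGroup P] [Module A P] [AddCommGroup M] [Module A M] [AddCommGroup N] [Module A N]
  [AddCommGroup F] [Module A F] [AddCommGroup X] [Module A X] [AddCommGroup Y] [Module A Y]

/-- Multiplication by `t` on `M` factors through `X`. -/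
def SMulFactors (t : A) (M X : Type u) [AddCommGroup M] [Module A M] [AddCommGroup X]
    [Module A X] : Prop :=
  ∃ (s : M →ₗ[A] X) (f : X →ₗ[A] M), f ∘ₗ s = t • LinearMap.id

lemma SMulFactors.smul {t : A} (h : SMulFactors t M X) (a : A) : SMulFactors (a * t) M X := by
  obtain ⟨s, f, h⟩ := h
  exact ⟨s, a • f, by rw [LinearMap.smul_comp, h, mul_smul]⟩

lemma SMulFactors.add {s t : A} (h : SMulFactors s M X) (h' : SMulFactors t M Y) :
    SMulFactors (s + t) M (X × Y) := by
  obtain ⟨a, f, h⟩ := h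
  obtain ⟨b, g, h'⟩ := h'
  exact ⟨a.prod b, f.coprod g, by rw [LinearMap.coprod_comp_prod, h, h', add_smul]⟩

lemma SMulFactors.exists_free {t : A} [Module.Finite A X] [Module.Projective A X]
    (h : SMulFactors t M X) : ∃ n : ℕ, SMulFactors t M (Fin n → A) := by
  obtain ⟨s, f, h⟩ := h
  obtain ⟨n, r, i, -, -, hr⟩ := Module.Finite.exists_comp_eq_id_of_projective A X
  refine ⟨n, i ∘ₗ s, f ∘ₗ r, ?_⟩
  rw [LinearMap.comp_assoc, ← LinearMap.comp_assoc s, hr, LinearMap.id_comp, h]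

/-- The stable annihilator of `M`: the scalars whose multiplication on `M` factors through a finite
free module, equivalently the annihilator of the functor `Ext¹(M, -)`. -/
def stableAnnihilator (A : Type u) [CommRing A] (M : Type u) [AddCommGroup M] [Module A M] :
    Ideal A where
  carrier := {t | ∃ n : ℕ, SMulFactors t M (Fin n → A)}
  zero_mem' := ⟨0, 0, 0, by simp⟩
  add_mem' := fun ⟨_, h⟩ ⟨_, h'⟩ => (h.add h').exists_free
  smul_mem' := fun a _ ⟨n, h⟩ => ⟨n, h.smul a⟩

lemma SMulFactors.mem_stableAnnihilator {t : A} [Module.Finite A X] [Module.Projective A X]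
    (h : SMulFactors t M X) : t ∈ stableAnnihilator A M :=
  h.exists_free

lemma exists_comp_eq_smul_of_mem_stableAnnihilator {t : A} (h : t ∈ stableAnnihilator A M)
    {π : F →ₗ[A] M} (hπ : Function.Surjective π) :
    ∃ δ : M →ₗ[A] F, π ∘ₗ δ = t • LinearMap.id := by
  obtain ⟨n, s, f, h⟩ := h
  obtain ⟨g, rfl⟩ := Module.projective_lifting_property π f hπ
  exact ⟨g ∘ₗ s, h⟩

lemma stableAnnihilator_eq_top_iff [Module.Finite A M] :
    stableAnnihilator A M = ⊤ ↔ Module.Projective A M := by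
  rw [Ideal.eq_top_iff_one]
  constructor
  · rintro ⟨n, s, f, h⟩
    exact Module.Projective.of_split s f (by rw [h, one_smul])
  · intro _
    exact SMulFactors.mem_stableAnnihilator (X := M) ⟨LinearMap.id, LinearMap.id, by simp⟩

lemma IsSES.stableAnnihilator_mul_le {f : K →ₗ[A] P} {g : P →ₗ[A] M} (hs : IsSES f g) :
    stableAnnihilator A K * stableAnnihilator A M ≤ stableAnnihilator A P := by
  refine Ideal.mul_le.2 ?_
  rintro t ⟨m, a, b, hab⟩ s ⟨n, c, d, hcd⟩
  obtain ⟨l, hl⟩ := Module.projective_lifting_property g d hs.2.1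
  let q : P →ₗ[A] LinearMap.ker g := (s • LinearMap.id - l ∘ₗ c ∘ₗ g).codRestrict _ fun p => by
    have h₁ : g (l (c (g p))) = d (c (g p)) := LinearMap.congr_fun hl _
    have h₂ : d (c (g p)) = s • g p := LinearMap.congr_fun hcd _
    simp [h₁, h₂]
  have hq : f ∘ₗ hs.kerEquiv.symm.toLinearMap ∘ₗ q = s • LinearMap.id - l ∘ₗ c ∘ₗ g := by
    ext p
    exact congrArg Subtype.val (hs.kerEquiv.apply_symm_apply (q p))
  refine SMulFactors.mem_stableAnnihilator (X := (Fin n → A) × (Fin m → A))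
    ⟨(c ∘ₗ g).prod (a ∘ₗ hs.kerEquiv.symm.toLinearMap ∘ₗ q), (t • l).coprod (f ∘ₗ b), ?_⟩
  calc (t • l).coprod (f ∘ₗ b) ∘ₗ (c ∘ₗ g).prod (a ∘ₗ hs.kerEquiv.symm.toLinearMap ∘ₗ q)
      = t • l ∘ₗ c ∘ₗ g + f ∘ₗ (b ∘ₗ a) ∘ₗ hs.kerEquiv.symm.toLinearMap ∘ₗ q := by
        rw [LinearMap.coprod_comp_prod, LinearMap.smul_comp]
        rfl
    _ = t • (l ∘ₗ c ∘ₗ g + f ∘ₗ hs.kerEquiv.symm.toLinearMap ∘ₗ q) := by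
        rw [hab, LinearMap.smul_comp, LinearMap.comp_smul, LinearMap.id_comp, smul_add]
    _ = (t * s) • LinearMap.id := by rw [hq, add_sub_cancel, mul_smul]

lemma stableAnnihilator_le_ker [Module.Finite A P] [Module.Projective A P] {g : P →ₗ[A] M}
    (hg : Function.Surjective g) :
    stableAnnihilator A M ≤ stableAnnihilator A (LinearMap.ker g) := by
  intro t ht
  obtain ⟨δ, hδ⟩ := exists_comp_eq_smul_of_mem_stableAnnihilator ht hg
  refine SMulFactors.mem_stableAnnihilator (X := P) ⟨(LinearMap.ker g).subtype,
    (t • LinearMap.id - δ ∘ₗ g).codRestrict _ fun p => by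
      simpa [sub_eq_zero] using (LinearMap.congr_fun hδ (g p)).symm, ?_⟩
  ext ⟨k, hk⟩
  simp [LinearMap.mem_ker.1 hk]

end StableAnnihilator

section PullbackSMul

variable {A : Type u} [CommRing A] {M F X : Type u} [AddCommGroup M] [Module A M]
  [AddCommGroup F] [Module A F] [AddCommGroup X] [Module A X] {𝒳 : Set (ModuleCat.{u} A)}

/-- The pullback of `π` along multiplication by `x`. When `π` is surjective this is the middle term
of `x` times the extension `0 → ker π → F → M → 0`. -/
abbrev pullbackSMul (π : F →ₗ[A] M) (x : A) : Submodule A (M × F) :=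
  pullback (x • LinearMap.id) π

variable {π : F →ₗ[A] M} {x y : A}

lemma IsResolving.pullbackSMul_mem [IsNoetherianRing A] [Module.Finite A F] [Module.Projective A F]
    (h : IsResolving A 𝒳) (hπ : Function.Surjective π) (x : A) (hM : ModuleCat.of A M ∈ 𝒳) :
    ModuleCat.of A (pullbackSMul π x) ∈ 𝒳 :=
  h.isExtClosed.mem_of_isSES (isSES_pullbackFst _ hπ) (h.ker_mem_of_projective hπ hM) hM

lemma surjective_coprod_neg (hπ : Function.Surjective π) (f : X →ₗ[A] M) :
    Function.Surjective (f.coprod (-π)) := fun m => by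
  obtain ⟨v, hv⟩ := hπ (-m)
  exact ⟨(0, v), by simp [hv]⟩

lemma IsExtClosed.mem_of_pullbackSMul_mem (h : IsExtClosed A 𝒳) (hπ : Function.Surjective π)
    (hX : ModuleCat.of A X ∈ 𝒳) (hfac : SMulFactors x M X)
    (hE : ModuleCat.of A (pullbackSMul π x) ∈ 𝒳) : ModuleCat.of A M ∈ 𝒳 := by
  obtain ⟨s, f, hsf⟩ := hfac
  have hW := h.mem_of_isSES
    (isSES_pullbackFst f (surjective_coprod_neg hπ (x • LinearMap.id))) hE hX
  exact h.mem_of_retract ((s.prod (LinearMap.inl A M F)).codRestrict (pullback f _) fun m => by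
      simpa using LinearMap.congr_fun hsf m)
    (LinearMap.fst A M F ∘ₗ pullbackSnd f _) rfl hW

lemma IsExtClosed.pullbackSMul_mul_mem (h : IsExtClosed A 𝒳) (hπ : Function.Surjective π)
    (hx : ModuleCat.of A (pullbackSMul π x) ∈ 𝒳) (hy : ModuleCat.of A (pullbackSMul π y) ∈ 𝒳) :
    ModuleCat.of A (pullbackSMul π (x * y)) ∈ 𝒳 := by
  let fst := pullbackFst (x • LinearMap.id) π
  have hW := h.mem_of_isSES
    (isSES_pullbackFst fst (surjective_coprod_neg hπ (y • LinearMap.id))) hy hx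
  let i : pullbackSMul π (x * y) →ₗ[A] pullback fst ((y • LinearMap.id).coprod (-π)) :=
    LinearMap.codRestrict _ (((((y • LinearMap.id).prodMap LinearMap.id) ∘ₗ
        (pullbackSMul π (x * y)).subtype).codRestrict (pullbackSMul π x) fun z => by
          simpa [mul_smul, smul_comm x y] using mem_pullback.1 z.2).prod
      (LinearMap.inl A M F ∘ₗ pullbackFst _ _)) fun z => by
        simp [fst, pullbackFst]
  let r : pullback fst ((y • LinearMap.id).coprod (-π)) →ₗ[A] pullbackSMul π (x * y) :=
    LinearMap.codRestrict _ ((LinearMap.fst A M F ∘ₗ pullbackSnd _ _).prod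
      (pullbackSnd _ _ ∘ₗ pullbackFst _ _ + x • LinearMap.snd A M F ∘ₗ pullbackSnd _ _)) fun z => by
        have h₁ : x • z.1.1.1.1 = π z.1.1.1.2 := mem_pullback.1 z.1.1.2
        have h₂ : z.1.1.1.1 = y • z.1.2.1 - π z.1.2.2 := by
          rw [sub_eq_add_neg]
          exact mem_pullback.1 z.2
        simp [pullbackSnd, pullbackFst, ← h₁, h₂, mul_smul, smul_sub]
  refine h.mem_of_retract i r ?_ hW
  ext z <;> simp [i, r, pullbackFst, pullbackSnd]

lemma IsResolving.mem_of_pullbackSMul_mem (h : IsResolving A 𝒳) (hπ : Function.Surjective π)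
    (hx : x ∈ (stableAnnihilator A M).radical) (hE : ModuleCat.of A (pullbackSMul π x) ∈ 𝒳) :
    ModuleCat.of A M ∈ 𝒳 := by
  have hpow (a : ℕ) : ModuleCat.of A (pullbackSMul π (x ^ (a + 1))) ∈ 𝒳 := by
    induction a with
    | zero => rwa [zero_add, pow_one]
    | succ a ih => exact pow_succ x (a + 1) ▸ h.isExtClosed.pullbackSMul_mul_mem hπ ih hE
  obtain ⟨a, ha⟩ := hx
  obtain ⟨n, hn⟩ := Ideal.mul_mem_right x _ ha
  exact h.isExtClosed.mem_of_pullbackSMul_mem hπ (h.of_projective_mem _) (pow_succ x a ▸ hn)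
    (hpow a)

lemma mem_stableAnnihilator_pullbackSMul [Module.Finite A F] [Module.Projective A F]
    (π : F →ₗ[A] M) (x : A) : x ∈ stableAnnihilator A (pullbackSMul π x) := by
  refine SMulFactors.mem_stableAnnihilator (X := F) ⟨pullbackSnd _ _,
    (π.prod (x • LinearMap.id)).codRestrict _ fun f => by simp, ?_⟩
  ext ⟨z, hz⟩
  · simpa [pullbackSnd] using (mem_pullback.1 hz).symm
  · simp [pullbackSnd]

lemma radical_stableAnnihilator_sup_span_le [Module.Finite A F] [Module.Projective A F]
    (hπ : Function.Surjective π) (x : A) :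
    (stableAnnihilator A M).radical ⊔ Ideal.span {x} ≤
      (stableAnnihilator A (pullbackSMul π x)).radical := by
  refine sup_le ?_ ?_
  · calc (stableAnnihilator A M).radical
        = (stableAnnihilator A M * stableAnnihilator A M).radical := by simp [Ideal.radical_mul]
      _ ≤ _ := Ideal.radical_mono <| (Ideal.mul_mono_left (stableAnnihilator_le_ker hπ)).trans
        (isSES_pullbackFst _ hπ).stableAnnihilator_mul_le
  · rw [Ideal.span_singleton_le_iff_mem]
    exact Ideal.le_radical (mem_stableAnnihilator_pullbackSMul π x)

end PullbackSMul

section ProjectiveDimension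

/-- `M` has projective dimension at most `j`. -/
abbrev PdLE (A : Type u) [CommRing A] (j : ℕ) (M : Type u) [AddCommGroup M] [Module A M] : Prop :=
  HasProjectiveDimensionLE (ModuleCat.of A M) j

variable {A : Type u} [CommRing A] {K P M N F : Type u} [AddCommGroup K] [Module A K]
  [AddCommGroup P] [Module A P] [AddCommGroup M] [Module A M] [AddCommGroup N] [Module A N]
  [AddCommGroup F] [Module A F] {j : ℕ}

lemma pdLE_zero_iff : PdLE A 0 M ↔ Module.Projective A M :=
  (projective_iff_hasProjectiveDimensionLE_zero _).symm.trans (IsProjective.iff_projective M).symm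

namespace PdLE

lemma mono {i : ℕ} (hij : i ≤ j) (hM : PdLE A i M) : PdLE A j M :=
  hasProjectiveDimensionLT_of_ge _ (i + 1) (j + 1) (by lia)

lemma of_projective [Module.Projective A M] : PdLE A j M :=
  mono j.zero_le (pdLE_zero_iff.2 ‹_›)

lemma of_equiv (e : M ≃ₗ[A] N) : PdLE A j M → PdLE A j N := fun _ =>
  ModuleCat.hasProjectiveDimensionLE_of_linearEquiv (M := ModuleCat.of A M)
    (N := ModuleCat.of A N) e j

lemma middle {f : K →ₗ[A] P} {g : P →ₗ[A] M} (h : IsSES f g) (hK : PdLE A j K)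
    (hM : PdLE A j M) : PdLE A j P :=
  h.shortExact.hasProjectiveDimensionLT_X₂ (j + 1) hK hM

lemma right {f : K →ₗ[A] P} {g : P →ₗ[A] M} (h : IsSES f g) (hK : PdLE A j K)
    (hP : PdLE A (j + 1) P) : PdLE A (j + 1) M :=
  h.shortExact.hasProjectiveDimensionLT_X₃ (j + 1) hK hP

lemma left {f : K →ₗ[A] P} {g : P →ₗ[A] M} (h : IsSES f g) (hP : PdLE A j P)
    (hM : PdLE A (j + 1) M) : PdLE A j K :=
  h.shortExact.hasProjectiveDimensionLT_X₁ (j + 1) hP hM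

lemma of_retract {i : M →ₗ[A] N} {r : N →ₗ[A] M} (hr : r ∘ₗ i = LinearMap.id) :
    PdLE A j N → PdLE A j M := fun _ =>
  Retract.hasProjectiveDimensionLT (Y := ModuleCat.of A N)
    ⟨ModuleCat.ofHom i, ModuleCat.ofHom r, ModuleCat.hom_ext hr⟩ (j + 1)

end PdLE

lemma pdLE_succ_iff_ker [Module.Projective A F] {π : F →ₗ[A] M} (hπ : Function.Surjective π) :
    PdLE A (j + 1) M ↔ PdLE A j (LinearMap.ker π) :=
  ⟨.left (isSES_ker_subtype hπ) .of_projective, fun h => .right (isSES_ker_subtype hπ) h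
    .of_projective⟩

lemma pdLE_iff [IsNoetherianRing A] (j : ℕ) (M : ModuleCat.{u} A) [Module.Finite A M] :
    pdLE A j M ↔ PdLE A j M := by
  induction j generalizing M with
  | zero => exact pdLE_zero_iff.symm
  | succ j ih =>
    constructor
    · rintro ⟨K, P, f, g, _, _, h, hK⟩
      have : Module.Finite A K := Module.Finite.of_injective f h.1
      exact .right h ((ih K).1 hK) .of_projective
    · intro h
      obtain ⟨n, π, hπ⟩ := Module.Finite.exists_fin' A M
      exact ⟨ModuleCat.of A (LinearMap.ker π), ModuleCat.of A (Fin n → A), _, π,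
        inferInstanceAs (Module.Finite A (Fin n → A)),
        inferInstanceAs (Module.Projective A (Fin n → A)), isSES_ker_subtype hπ,
        (ih (ModuleCat.of A (LinearMap.ker π))).2 ((pdLE_succ_iff_ker hπ).1 h)⟩

lemma pdim_le_iff [IsNoetherianRing A] (j : ℕ) (M : ModuleCat.{u} A) [Module.Finite A M] :
    pdim A M ≤ ((j : ℕ∞) : WithBot ℕ∞) ↔ PdLE A j M := by
  constructor
  · intro h
    rcases Set.eq_empty_or_nonempty {x : WithBot ℕ∞ | (x = ⊥ ∧ Subsingleton M) ∨
        ∃ n : ℕ, x = (n : ℕ∞) ∧ pdLE A n M} with he | hne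
    · rw [pdim, he, sInf_empty, top_le_iff] at h
      exact absurd (WithBot.coe_injective h) (ENat.natCast_ne_top j)
    · rcases csInf_mem hne with ⟨-, _⟩ | ⟨n, hn, hM⟩
      · exact .of_projective
      · refine .mono ?_ ((pdLE_iff n M).1 hM)
        rw [pdim, hn] at h
        exact_mod_cast h
  · exact fun h => sInf_le (.inr ⟨j, rfl, (pdLE_iff j M).2 h⟩)

end ProjectiveDimension

section Localization

variable {A : Type u} [CommRing A] {K P M N F X : Type u} [AddCommGroup K] [Module A K]
  [AddCommGroup P] [Module A P] [AddCommGroup M] [Module A M] [AddCommGroup N] [Module A N]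
  [AddCommGroup F] [Module A F] [AddCommGroup X] [Module A X] (S : Submonoid A)

lemma IsSES.localized {f : K →ₗ[A] P} {g : P →ₗ[A] M} (h : IsSES f g) :
    IsSES (LocalizedModule.map S f) (LocalizedModule.map S g) :=
  isSES_of_exact (LocalizedModule.map_injective S f h.1) (LocalizedModule.map_surjective S g h.2.1)
    (LocalizedModule.map_exact S f g h.exact)

lemma localizedModule_map_mkLinearMap (f : P →ₗ[A] M) (x : P) :
    LocalizedModule.map S f (LocalizedModule.mkLinearMap S P x) =
      LocalizedModule.mkLinearMap S M (f x) :=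
  IsLocalizedModule.map_apply S _ _ f x

lemma nonempty_localized_pullback_equiv (f : P →ₗ[A] M) (g : F →ₗ[A] M) :
    Nonempty (LocalizedModule S (pullback f g) ≃ₗ[Localization S]
      pullback (LocalizedModule.map S f) (LocalizedModule.map S g)) := by
  let ι := (LocalizedModule.mkLinearMap S P).prodMap (LocalizedModule.mkLinearMap S F)
  let c := IsLocalizedModule.map S ι (LocalizedModule.mkLinearMap S M) (f.coprod (-g))
  have hc : c =
      ((LocalizedModule.map S f).coprod (-LocalizedModule.map S g)).restrictScalars A := by
    refine IsLocalizedModule.linearMap_ext S ι (LocalizedModule.mkLinearMap S M) ?_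
    rw [IsLocalizedModule.map_comp]
    ext x <;> simp only [ι, LinearMap.comp_apply, LinearMap.inl_apply, LinearMap.inr_apply,
      LinearMap.prodMap_apply, LinearMap.restrictScalars_apply, LinearMap.coprod_apply,
      LinearMap.neg_apply, localizedModule_map_mkLinearMap, map_zero, map_neg,
      add_zero, zero_add]
  have := LinearMap.toKerLocalized_isLocalizedModule (Localization S) S ι
    (LocalizedModule.mkLinearMap S M) (f.coprod (-g))
  let e := (IsLocalizedModule.iso S (LinearMap.toKerIsLocalized S ι
    (LocalizedModule.mkLinearMap S M) (f.coprod (-g)))).trans (LinearEquiv.ofEq (LinearMap.ker c)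
      ((pullback (LocalizedModule.map S f) (LocalizedModule.map S g)).restrictScalars A)
      (by rw [hc]; rfl))
  exact ⟨(e.extendScalarsOfIsLocalization S (Localization S)).trans
    (Submodule.restrictScalarsEquiv A _ _ _)⟩

lemma nonempty_localized_pullbackSMul_equiv (π : F →ₗ[A] M) (x : A) :
    Nonempty (LocalizedModule S (pullbackSMul π x) ≃ₗ[Localization S]
      pullbackSMul (LocalizedModule.map S π) (algebraMap A (Localization S) x)) := by
  have hx : LocalizedModule.map S (x • LinearMap.id) =
      algebraMap A (Localization S) x • (LinearMap.id : LocalizedModule S M →ₗ[_] _) := by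
    ext z
    induction z using LocalizedModule.induction_on with
    | h m s => simp [LocalizedModule.smul'_mk]
  rw [pullbackSMul, pullbackSMul, ← hx]
  exact nonempty_localized_pullback_equiv S (x • LinearMap.id) π

end Localization

section LocalDescent

variable {A : Type u} [CommRing A] {M F F' : Type u} [AddCommGroup M] [Module A M]
  [AddCommGroup F] [Module A F] [AddCommGroup F'] [Module A F'] {π : F →ₗ[A] M} {x : A}

lemma projective_of_projective_pullbackSMul [IsNoetherianRing A] [IsLocalRing A]
    [Module.Finite A F] (hπ : Function.Surjective π) (hx : x ∈ IsLocalRing.maximalIdeal A)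
    [Module.Projective A (pullbackSMul π x)] : Module.Projective A M := by
  let fst := pullbackFst (x • LinearMap.id) π
  have hs : IsSES (pullbackInr (x • LinearMap.id) π) fst := isSES_pullbackFst _ hπ
  obtain ⟨l, hl⟩ := Module.projective_lifting_property π fst hπ
  have hl' (z) : π (l z) = z.1.1 := LinearMap.congr_fun hl z
  let θ : pullbackSMul π x →ₗ[A] LinearMap.ker π :=
    (pullbackSnd _ _ - x • l).codRestrict _ fun z => by
      simpa [pullbackSnd, hl', sub_eq_zero] using (mem_pullback.1 z.2).symm
  let α : LinearMap.ker π →ₗ[A] LinearMap.ker π := θ ∘ₗ pullbackInr _ π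
  let β : LinearMap.ker π →ₗ[A] LinearMap.ker π :=
    (l ∘ₗ pullbackInr _ π).codRestrict _ fun k => hl' _
  have hα (k) : k = α k + x • β k := Subtype.ext (sub_add_cancel (k : F) (x • (β k : F))).symm
  -- `α` is the identity modulo the maximal ideal, so it is bijective by Nakayama.
  have hsurj : Function.Surjective α := by
    rw [← LinearMap.range_eq_top, ← top_le_iff]
    refine Submodule.le_of_le_smul_of_le_jacobson_bot (I := IsLocalRing.maximalIdeal A)
      Module.Finite.fg_top (IsLocalRing.maximalIdeal_le_jacobson _) fun k _ => ?_
    rw [hα k]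
    exact Submodule.add_mem_sup (LinearMap.mem_range_self α k) (Submodule.smul_mem_smul hx trivial)
  let e := LinearEquiv.ofBijective α
    ⟨OrzechProperty.injective_of_surjective_endomorphism α hsurj, hsurj⟩
  have hretract : ∃ r, r ∘ₗ pullbackInr (x • LinearMap.id) π = LinearMap.id :=
    ⟨e.symm.toLinearMap ∘ₗ θ, LinearMap.ext e.symm_apply_apply⟩
  obtain ⟨s, hsplit⟩ := ((hs.exact.split_tfae hs.1 hs.2.1).out 1 0).1 hretract
  exact Module.Projective.of_split s fst hsplit

/-- The cover of `pullbackSMul π x` obtained from a cover `π` of `M` and a cover `ρ` of the kernel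
of `π`. -/
def pullbackSMulCover (π : F →ₗ[A] M) (ρ : F' →ₗ[A] LinearMap.ker π) (x : A) :
    (F' × F) →ₗ[A] pullbackSMul π x :=
  (pullbackInr _ π ∘ₗ ρ).coprod ((π.prod (x • LinearMap.id)).codRestrict _ fun f => by simp)

lemma coe_pullbackSMulCover (ρ : F' →ₗ[A] LinearMap.ker π) (z : F' × F) :
    (pullbackSMulCover π ρ x z : M × F) = (π z.2, ρ z.1 + x • z.2) := by
  simp [pullbackSMulCover, pullbackInr]

lemma surjective_pullbackSMulCover (hπ : Function.Surjective π) {ρ : F' →ₗ[A] LinearMap.ker π}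
    (hρ : Function.Surjective ρ) : Function.Surjective (pullbackSMulCover π ρ x) := by
  rintro ⟨⟨m, v⟩, hz⟩
  obtain ⟨f, rfl⟩ := hπ m
  obtain ⟨g, hg⟩ := hρ ⟨v - x • f, by simpa [sub_eq_zero] using (mem_pullback.1 hz).symm⟩
  exact ⟨(g, f), Subtype.ext (by simp [coe_pullbackSMulCover, hg])⟩

lemma nonempty_pullbackSMul_equiv_ker_pullbackSMulCover (ρ : F' →ₗ[A] LinearMap.ker π) :
    Nonempty (pullbackSMul ρ x ≃ₗ[A] LinearMap.ker (pullbackSMulCover π ρ x)) := by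
  have hker (z : F' × F) : z ∈ LinearMap.ker (pullbackSMulCover π ρ x) ↔
      π z.2 = 0 ∧ (ρ z.1 : F) + x • z.2 = 0 := by
    rw [LinearMap.mem_ker, ← Submodule.coe_eq_zero, coe_pullbackSMulCover, Prod.mk_eq_zero]
  let e : pullbackSMul ρ x →ₗ[A] LinearMap.ker (pullbackSMulCover π ρ x) :=
    LinearMap.codRestrict _ (((LinearMap.snd A _ F').prod
      (-Submodule.subtype _ ∘ₗ LinearMap.fst A _ F')) ∘ₗ Submodule.subtype _) fun z => by
        have hz : x • (z.1.1 : F) = ρ z.1.2 := congrArg Subtype.val (mem_pullback.1 z.2)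
        simp [hker, ← hz]
  refine ⟨LinearEquiv.ofBijective e ⟨?_, ?_⟩⟩
  · rintro ⟨⟨k, g⟩, _⟩ ⟨⟨k', g'⟩, _⟩ h
    have h' : (g, -(k : F)) = (g', -(k' : F)) := congrArg Subtype.val h
    simpa [and_comm] using h'
  · rintro ⟨⟨g, f⟩, hz⟩
    obtain ⟨hf, hgf⟩ := (hker _).1 hz
    let k : LinearMap.ker π := ⟨f, hf⟩
    have hk : x • -k = ρ g := Subtype.ext (by simpa using (eq_neg_of_add_eq_zero_left hgf).symm)
    exact ⟨⟨(-k, g), mem_pullback.2 hk⟩, Subtype.ext (Prod.ext rfl (neg_neg f))⟩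

lemma PdLE.of_pullbackSMul [IsNoetherianRing A] [IsLocalRing A] [Module.Finite A F]
    [Module.Projective A F] (hπ : Function.Surjective π) (hx : x ∈ IsLocalRing.maximalIdeal A)
    {j : ℕ} (hE : PdLE A j (pullbackSMul π x)) : PdLE A j M := by
  induction j generalizing M F with
  | zero =>
    rw [pdLE_zero_iff] at *
    exact projective_of_projective_pullbackSMul hπ hx
  | succ j ih =>
    obtain ⟨n, ρ, hρ⟩ := Module.Finite.exists_fin' A (LinearMap.ker π)
    obtain ⟨e⟩ := nonempty_pullbackSMul_equiv_ker_pullbackSMulCover (x := x) ρ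
    exact (pdLE_succ_iff_ker hπ).2 <| ih hρ <| .of_equiv e.symm <|
      (pdLE_succ_iff_ker (surjective_pullbackSMulCover hπ hρ)).1 hE

end LocalDescent

section SpreadingOut

variable {A : Type u} [CommRing A] {M N X : Type u} [AddCommGroup M] [Module A M]
  [AddCommGroup N] [Module A N] [AddCommGroup X] [Module A X] (S : Submonoid A)

lemma localizedModule_map_smul (f : M →ₗ[A] N) (a : A) :
    LocalizedModule.map S (a • f) = algebraMap A (Localization S) a • LocalizedModule.map S f := by
  ext z
  induction z using LocalizedModule.induction_on with
  | h m s => simp [LocalizedModule.smul'_mk]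

lemma localizedModule_map_comp (g : N →ₗ[A] X) (f : M →ₗ[A] N) :
    LocalizedModule.map S (g ∘ₗ f) = LocalizedModule.map S g ∘ₗ LocalizedModule.map S f := by
  ext z
  induction z using LocalizedModule.induction_on with
  | h m s => simp

lemma localizedModule_map_id : LocalizedModule.map S (LinearMap.id : M →ₗ[A] M) = LinearMap.id := by
  ext z
  induction z using LocalizedModule.induction_on with
  | h m s => simp

lemma exists_localizedModule_map_eq_smul [IsNoetherianRing A] [Module.Finite A M]
    (g : LocalizedModule S M →ₗ[Localization S] LocalizedModule S N) :
    ∃ (f : M →ₗ[A] N) (s : S),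
      LocalizedModule.map S f = algebraMap A (Localization S) s • g := by
  have : Module.FinitePresentation A M := Module.finitePresentation_of_finite A M
  obtain ⟨f, s, hs⟩ := Module.FinitePresentation.exists_lift_of_isLocalizedModule S
    (LocalizedModule.mkLinearMap S N) (g.restrictScalars A ∘ₗ LocalizedModule.mkLinearMap S M)
  refine ⟨f, s, LinearMap.restrictScalars_injective A ?_⟩
  refine IsLocalizedModule.linearMap_ext S (LocalizedModule.mkLinearMap S M)
    (LocalizedModule.mkLinearMap S N) ?_
  ext m
  simpa [localizedModule_map_mkLinearMap, Submonoid.smul_def] using LinearMap.congr_fun hs m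

lemma exists_smul_eq_smul_of_localizedModule_map_eq [Module.Finite A M] {f g : M →ₗ[A] N}
    (h : LocalizedModule.map S f = LocalizedModule.map S g) :
    ∃ u : S, (u : A) • f = (u : A) • g := by
  refine Module.Finite.exists_smul_of_comp_eq_of_isLocalizedModule S
    (LocalizedModule.mkLinearMap S N) f g ?_
  ext m
  simpa [localizedModule_map_mkLinearMap] using
    LinearMap.congr_fun h (LocalizedModule.mkLinearMap S M m)

lemma exists_sMulFactors_of_localizedModule_retract [IsNoetherianRing A] [Module.Finite A M]
    [Module.Finite A X] {i : LocalizedModule S M →ₗ[Localization S] LocalizedModule S X}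
    {r : LocalizedModule S X →ₗ[Localization S] LocalizedModule S M} (hr : r ∘ₗ i = LinearMap.id) :
    ∃ t ∈ S, SMulFactors t M X := by
  obtain ⟨i', s, hs⟩ := exists_localizedModule_map_eq_smul S i
  obtain ⟨r', s', hs'⟩ := exists_localizedModule_map_eq_smul S r
  obtain ⟨u, hu⟩ := exists_smul_eq_smul_of_localizedModule_map_eq S
    (f := r' ∘ₗ i') (g := (s' * s : A) • LinearMap.id) (by
      rw [localizedModule_map_comp, localizedModule_map_smul, localizedModule_map_id, hs, hs',
        LinearMap.smul_comp, LinearMap.comp_smul, hr, map_mul, mul_smul])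
  exact ⟨u * (s' * s), S.mul_mem u.2 (S.mul_mem s'.2 s.2), i', (u : A) • r', by
    rw [LinearMap.smul_comp, hu, mul_smul, mul_smul, mul_smul]⟩

lemma SMulFactors.localized {t : A} (h : SMulFactors t M X) :
    SMulFactors (algebraMap A (Localization S) t) (LocalizedModule S M) (LocalizedModule S X) := by
  obtain ⟨s, f, h⟩ := h
  exact ⟨LocalizedModule.map S s, LocalizedModule.map S f, by
    rw [← localizedModule_map_comp, h, localizedModule_map_smul, localizedModule_map_id]⟩

instance [Module.Finite A M] : Module.Finite (Localization S) (LocalizedModule S M) :=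
  Module.Finite.of_isLocalizedModule S (LocalizedModule.mkLinearMap S M)

instance [Module.Projective A M] : Module.Projective (Localization S) (LocalizedModule S M) :=
  Module.projective_of_isLocalizedModule S (LocalizedModule.mkLinearMap S M)

instance [IsNoetherianRing A] : IsNoetherianRing (Localization S) :=
  IsLocalization.isNoetherianRing S _ inferInstance

lemma algebraMap_mem_stableAnnihilator {t : A} (h : t ∈ stableAnnihilator A M) :
    algebraMap A (Localization S) t ∈ stableAnnihilator (Localization S) (LocalizedModule S M) := by
  obtain ⟨n, h⟩ := h
  exact (h.localized S).mem_stableAnnihilator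

end SpreadingOut

section LocalPdLE

/-- The localization of `M` at `p` has projective dimension at most `j`. -/
def LocalPdLE {A : Type u} [CommRing A] (p : PrimeSpectrum A) (j : ℕ) (M : Type u) [AddCommGroup M]
    [Module A M] : Prop :=
  PdLE (Localization.AtPrime p.asIdeal) j (LocalizedModule p.asIdeal.primeCompl M)

variable {A : Type u} [CommRing A] {K P M N F : Type u} [AddCommGroup K] [Module A K]
  [AddCommGroup P] [Module A P] [AddCommGroup M] [Module A M] [AddCommGroup N] [Module A N]
  [AddCommGroup F] [Module A F] {p q : PrimeSpectrum A} {j : ℕ}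

lemma localPdim_le_iff [IsNoetherianRing A] (p : PrimeSpectrum A) (j : ℕ) (M : ModuleCat.{u} A)
    [Module.Finite A M] : localPdim A p M ≤ ((j : ℕ∞) : WithBot ℕ∞) ↔ LocalPdLE p j M :=
  have : Module.Finite (Localization.AtPrime p.asIdeal) (localizeM A p M) :=
    inferInstanceAs (Module.Finite (Localization p.asIdeal.primeCompl) (LocalizedModule _ M))
  pdim_le_iff j _

namespace LocalPdLE

lemma mono {i : ℕ} (hij : i ≤ j) (hM : LocalPdLE p i M) : LocalPdLE p j M :=
  PdLE.mono hij hM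

lemma of_projective [Module.Projective A M] : LocalPdLE p j M :=
  have : Module.Projective (Localization.AtPrime p.asIdeal)
      (LocalizedModule p.asIdeal.primeCompl M) := inferInstanceAs
    (Module.Projective (Localization p.asIdeal.primeCompl) (LocalizedModule p.asIdeal.primeCompl M))
  PdLE.of_projective

lemma middle {f : K →ₗ[A] P} {g : P →ₗ[A] M} (h : IsSES f g) (hK : LocalPdLE p j K)
    (hM : LocalPdLE p j M) : LocalPdLE p j P :=
  PdLE.middle (h.localized _) hK hM

lemma right {f : K →ₗ[A] P} {g : P →ₗ[A] M} (h : IsSES f g) (hK : LocalPdLE p j K)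
    (hP : LocalPdLE p (j + 1) P) : LocalPdLE p (j + 1) M :=
  PdLE.right (h.localized _) hK hP

lemma left {f : K →ₗ[A] P} {g : P →ₗ[A] M} (h : IsSES f g) (hP : LocalPdLE p j P)
    (hM : LocalPdLE p (j + 1) M) : LocalPdLE p j K :=
  PdLE.left (h.localized _) hP hM

lemma of_retract {i : M →ₗ[A] N} {r : N →ₗ[A] M} (hr : r ∘ₗ i = LinearMap.id)
    (hN : LocalPdLE p j N) : LocalPdLE p j M :=
  PdLE.of_retract (by rw [← localizedModule_map_comp, hr, localizedModule_map_id]) hN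

end LocalPdLE

lemma localPdLE_succ_iff_ker [Module.Projective A F] {π : F →ₗ[A] M}
    (hπ : Function.Surjective π) : LocalPdLE p (j + 1) M ↔ LocalPdLE p j (LinearMap.ker π) :=
  ⟨.left (isSES_ker_subtype hπ) .of_projective, fun h => .right (isSES_ker_subtype hπ) h
    .of_projective⟩

lemma LocalPdLE.pullbackSMul [Module.Projective A F] {π : F →ₗ[A] M} (hπ : Function.Surjective π)
    (x : A) (hM : LocalPdLE p j M) : LocalPdLE p j (pullbackSMul π x) :=
  .middle (isSES_pullbackFst _ hπ) ((localPdLE_succ_iff_ker hπ).1 (hM.mono j.le_succ)) hM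

lemma LocalPdLE.of_pullbackSMul [IsNoetherianRing A] [Module.Finite A F] [Module.Projective A F]
    {π : F →ₗ[A] M} (hπ : Function.Surjective π) {x : A} (hx : x ∈ p.asIdeal)
    (hE : LocalPdLE p j (ResolvPaper.pullbackSMul π x)) : LocalPdLE p j M := by
  obtain ⟨e⟩ := nonempty_localized_pullbackSMul_equiv p.asIdeal.primeCompl π x
  exact PdLE.of_pullbackSMul (LocalizedModule.map_surjective _ π hπ)
    ((IsLocalization.AtPrime.to_map_mem_maximal_iff _ p.asIdeal x).2 hx) (.of_equiv e hE)

lemma localPdLE_zero_iff [IsNoetherianRing A] [Module.Finite A M] :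
    LocalPdLE p 0 M ↔ ¬ stableAnnihilator A M ≤ p.asIdeal := by
  refine pdLE_zero_iff.trans ⟨fun h hle => ?_, fun h => ?_⟩
  · obtain ⟨n, π, hπ⟩ := Module.Finite.exists_fin' A M
    obtain ⟨σ, hσ⟩ := Module.projective_lifting_property
      (LocalizedModule.map p.asIdeal.primeCompl π) LinearMap.id
      (LocalizedModule.map_surjective _ π hπ)
    obtain ⟨t, ht, hfac⟩ := exists_sMulFactors_of_localizedModule_retract _ hσ
    exact ht (hle hfac.mem_stableAnnihilator)
  · obtain ⟨t, ht, htp⟩ := SetLike.not_le_iff_exists.1 h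
    rw [← stableAnnihilator_eq_top_iff]
    exact Ideal.eq_top_of_isUnit_mem _ (algebraMap_mem_stableAnnihilator _ ht)
      (IsLocalization.map_units _ (⟨t, htp⟩ : p.asIdeal.primeCompl))

lemma LocalPdLE.of_le [IsNoetherianRing A] [Module.Finite A M] (hpq : p.asIdeal ≤ q.asIdeal)
    (h : LocalPdLE q j M) : LocalPdLE p j M := by
  induction j generalizing M with
  | zero =>
    rw [localPdLE_zero_iff] at *
    exact fun hp => h (hp.trans hpq)
  | succ j ih =>
    obtain ⟨n, π, hπ⟩ := Module.Finite.exists_fin' A M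
    exact (localPdLE_succ_iff_ker hπ).2 (ih ((localPdLE_succ_iff_ker hπ).1 h))

end LocalPdLE

section QuotSMulTop

variable {A : Type u} [CommRing A] {K P M N : Type u} [AddCommGroup K] [Module A K]
  [AddCommGroup P] [Module A P] [AddCommGroup M] [Module A M] [AddCommGroup N] [Module A N]

/-- The map `M / xM → N / xN` induced by `f : M → N`, linear over `A / (x)`. -/
def quotSMulTopMap (x : A) (f : M →ₗ[A] N) :
    QuotSMulTop x M →ₗ[A ⧸ Ideal.span {x}] QuotSMulTop x N :=
  (QuotSMulTop.map x f).extendScalarsOfSurjective Ideal.Quotient.mk_surjective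

lemma quotSMulTop_mk_eq_zero_iff {x : A} {m : M} :
    (Submodule.Quotient.mk m : QuotSMulTop x M) = 0 ↔ ∃ m' : M, x • m' = m := by
  simp [Submodule.Quotient.mk_eq_zero, Submodule.mem_smul_pointwise_iff_exists]

lemma IsSES.quotSMulTop {f : K →ₗ[A] P} {g : P →ₗ[A] M} (h : IsSES f g) {x : A}
    (hx : IsSMulRegular M x) : IsSES (quotSMulTopMap x f) (quotSMulTopMap x g) := by
  have exact_zero : Function.Exact (0 : PUnit.{u + 1} →ₗ[A] K) f := fun k => by
    simp [map_eq_zero_iff f h.1, eq_comm]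
  have hf := QuotSMulTop.map_first_exact_on_four_term_exact_of_isSMulRegular_last exact_zero
    h.exact hx
  refine isSES_of_exact ((injective_iff_map_eq_zero _).2 fun k hk => ?_)
    (QuotSMulTop.map_surjective x h.2.1) (QuotSMulTop.map_exact x h.exact h.2.1)
  obtain ⟨z, rfl⟩ := (hf k).1 hk
  simp

lemma SMulFactors.quotSMulTop {t : A} (h : SMulFactors t M N) (x : A) :
    SMulFactors (Ideal.Quotient.mk (Ideal.span {x}) t) (QuotSMulTop x M) (QuotSMulTop x N) := by
  obtain ⟨s, f, h⟩ := h
  refine ⟨quotSMulTopMap x s, quotSMulTopMap x f, LinearMap.ext fun m => ?_⟩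
  obtain ⟨m, rfl⟩ := Submodule.Quotient.mk_surjective _ m
  exact congrArg Submodule.Quotient.mk (LinearMap.congr_fun h m)

instance [Module.Finite A M] (x : A) :
    Module.Finite (A ⧸ Ideal.span {x}) (QuotSMulTop x M) :=
  Module.Finite.of_restrictScalars_finite A _ _

lemma map_stableAnnihilator_le (x : A) (M : Type u) [AddCommGroup M] [Module A M] :
    (stableAnnihilator A M).map (Ideal.Quotient.mk (Ideal.span {x})) ≤
      stableAnnihilator (A ⧸ Ideal.span {x}) (QuotSMulTop x M) :=
  Ideal.map_le_iff_le_comap.2 fun _ ⟨_, h⟩ => (h.quotSMulTop x).mem_stableAnnihilator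

section Local

variable [IsLocalRing A] {x : A}

lemma isLocalRing_quotient_span_singleton (hx : x ∈ IsLocalRing.maximalIdeal A) :
    IsLocalRing (A ⧸ Ideal.span {x}) := by
  have : Nontrivial (A ⧸ Ideal.span {x}) :=
    Ideal.Quotient.nontrivial_iff.2 fun h => hx (Ideal.span_singleton_eq_top.1 h)
  exact .of_surjective' _ Ideal.Quotient.mk_surjective

lemma maximalIdeal_quotient (I : Ideal A) [IsLocalRing (A ⧸ I)] :
    IsLocalRing.maximalIdeal (A ⧸ I) = (IsLocalRing.maximalIdeal A).map (Ideal.Quotient.mk I) :=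
  have := IsLocalHom.of_surjective (Ideal.Quotient.mk I) Ideal.Quotient.mk_surjective
  (IsLocalRing.map_maximalIdeal_of_surjective _ Ideal.Quotient.mk_surjective).symm

lemma maximalIdeal_quotient_le_radical {I : Ideal A} [IsLocalRing (A ⧸ I)] {J : Ideal A}
    {J' : Ideal (A ⧸ I)} (hJ : IsLocalRing.maximalIdeal A ≤ J.radical)
    (hJJ' : J.map (Ideal.Quotient.mk I) ≤ J') :
    IsLocalRing.maximalIdeal (A ⧸ I) ≤ J'.radical :=
  calc IsLocalRing.maximalIdeal (A ⧸ I)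
      = (IsLocalRing.maximalIdeal A).map (Ideal.Quotient.mk I) := maximalIdeal_quotient I
    _ ≤ J.radical.map (Ideal.Quotient.mk I) := Ideal.map_mono hJ
    _ ≤ (J.map (Ideal.Quotient.mk I)).radical := Ideal.map_radical_le _
    _ ≤ J'.radical := Ideal.radical_mono hJJ'

variable [IsNoetherianRing A] [Module.Finite A M]

lemma projective_quotSMulTop_iff (hx : x ∈ IsLocalRing.maximalIdeal A)
    (hM : IsSMulRegular M x) :
    Module.Projective (A ⧸ Ideal.span {x}) (QuotSMulTop x M) ↔ Module.Projective A M := by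
  have := isLocalRing_quotient_span_singleton hx
  have : Module.FinitePresentation A M := Module.finitePresentation_of_finite A M
  have : Module.FinitePresentation (A ⧸ Ideal.span {x}) (QuotSMulTop x M) :=
    Module.finitePresentation_of_finite _ _
  have free_iff := Module.free_quotSMulTop_iff_free A M
    (IsLocalRing.maximalIdeal_le_jacobson _ hx) hM
  constructor <;> intro h
  · have := free_iff.1 Module.free_of_flat_of_isLocalRing
    infer_instance
  · have := free_iff.2 Module.free_of_flat_of_isLocalRing
    infer_instance

lemma pdLE_quotSMulTop_iff (hx : x ∈ IsLocalRing.maximalIdeal A) (hA : IsSMulRegular A x)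
    (hM : IsSMulRegular M x) (j : ℕ) :
    PdLE (A ⧸ Ideal.span {x}) j (QuotSMulTop x M) ↔ PdLE A j M := by
  induction j generalizing M with
  | zero => rw [pdLE_zero_iff, pdLE_zero_iff, projective_quotSMulTop_iff hx hM]
  | succ j ih =>
    obtain ⟨n, π, hπ⟩ := Module.Finite.exists_fin' A M
    have hK : IsSMulRegular (LinearMap.ker π) x :=
      IsSMulRegular.submodule _ x (IsSMulRegular.pi fun _ => hA)
    have ses := (isSES_ker_subtype hπ).quotSMulTop hM
    rw [pdLE_succ_iff_ker hπ, ← ih hK]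
    exact ⟨fun h => .left ses .of_projective h, fun h => .right ses h .of_projective⟩

end Local

end QuotSMulTop

section RegularLocalRing

/-- `S` is a noetherian local ring that becomes a field after `d` successive quotients by regular
nonunits. Every regular local ring has this property, and its homological consequences are proved
by induction on `d`. -/
def IsIteratedRegular : ℕ → ∀ (S : Type u) [CommRing S], Prop
  | 0, S, _ => IsField S
  | d + 1, S, _ => IsNoetherianRing S ∧ ∃ _ : IsLocalRing S, ∃ x ∈ IsLocalRing.maximalIdeal S,
      IsSMulRegular S x ∧ IsIteratedRegular d (S ⧸ Ideal.span {x})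

variable {S : Type u} [CommRing S]

namespace IsIteratedRegular

variable {d : ℕ}

lemma isNoetherianRing (h : IsIteratedRegular d S) : IsNoetherianRing S := by
  cases d with
  | zero => let _ := IsField.toField h; infer_instance
  | succ d => exact h.1

lemma pdLE (h : IsIteratedRegular d S) (M : Type u) [AddCommGroup M] [Module S M]
    [Module.Finite S M] : PdLE S d M := by
  induction d generalizing S M with
  | zero =>
    let _ := IsField.toField h
    exact .of_projective
  | succ d ih =>
    obtain ⟨_, _, x, hx, hxS, hquot⟩ := h
    obtain ⟨n, π, hπ⟩ := Module.Finite.exists_fin' S M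
    have hK : IsSMulRegular (LinearMap.ker π) x :=
      IsSMulRegular.submodule _ x (IsSMulRegular.pi fun _ => hxS)
    rw [pdLE_succ_iff_ker hπ, ← pdLE_quotSMulTop_iff hx hxS hK]
    exact ih hquot _

lemma eq_zero_of_maximalIdeal_smul_eq_zero [IsLocalRing S] (h : IsIteratedRegular d S)
    {M : Type u} [AddCommGroup M] [Module S M] [Module.Finite S M] {j : ℕ} (hj : j < d)
    (hM : PdLE S j M) {y : M} (hy : ∀ t ∈ IsLocalRing.maximalIdeal S, t • y = 0) : y = 0 := by
  induction d generalizing S M j with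
  | zero => lia
  | succ d ih =>
    obtain ⟨_, _, x, hx, hxS, hquot⟩ := h
    obtain ⟨n, π, hπ⟩ := Module.Finite.exists_fin' S M
    have hF : IsSMulRegular (Fin n → S) x := IsSMulRegular.pi fun _ => hxS
    cases j with
    | zero =>
      rw [pdLE_zero_iff] at hM
      obtain ⟨σ, hσ⟩ := Module.projective_lifting_property π LinearMap.id hπ
      have hσy : σ y = 0 := hF (by simp [← map_smul, hy x hx])
      simpa [hσy] using (LinearMap.congr_fun hσ y).symm
    | succ j =>
      have hK : IsSMulRegular (LinearMap.ker π) x := IsSMulRegular.submodule _ x hF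
      have := isLocalRing_quotient_span_singleton hx
      have hKx := (pdLE_quotSMulTop_iff hx hxS hK j).2 ((pdLE_succ_iff_ker hπ).1 hM)
      obtain ⟨f, rfl⟩ := hπ y
      have hf : ∀ t ∈ IsLocalRing.maximalIdeal S, t • f ∈ LinearMap.ker π := fun t ht => by
        simp [hy t ht]
      -- If `𝔪` kills `π f`, then it kills the class of `x • f` in `ker π / x ker π`.
      have hxf := ih hquot (by lia) hKx (y := Submodule.Quotient.mk ⟨x • f, hf x hx⟩) (by
        rw [maximalIdeal_quotient]
        intro t' ht'
        obtain ⟨t, ht, rfl⟩ := (Ideal.mem_map_iff_of_surjective _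
          Ideal.Quotient.mk_surjective).1 ht'
        exact quotSMulTop_mk_eq_zero_iff.2 ⟨⟨t • f, hf t ht⟩, Subtype.ext (smul_comm x t f)⟩)
      obtain ⟨k, hk⟩ := quotSMulTop_mk_eq_zero_iff.1 hxf
      have hkf : (k : Fin n → S) = f := hF (congrArg Subtype.val hk)
      exact hkf ▸ k.2

end IsIteratedRegular

variable [IsLocalRing S] [IsNoetherianRing S]

local notation "𝔪" => IsLocalRing.maximalIdeal S

lemma exists_mem_maximalIdeal_notMem_sq_notMem_minimalPrimes (h : 0 < ringKrullDim S) :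
    ∃ x ∈ 𝔪, x ∉ 𝔪 * 𝔪 ∧ ∀ q ∈ minimalPrimes S, x ∉ q := by
  have hmin : 𝔪 ∉ minimalPrimes S := by
    rw [← Ideal.height_eq_zero_iff]
    intro h0
    rw [← IsLocalRing.maximalIdeal_height_eq_ringKrullDim, h0] at h
    exact lt_irrefl _ h
  have hsq : ¬ 𝔪 ≤ 𝔪 * 𝔪 := by
    intro h2
    have hbot : 𝔪 = ⊥ := Submodule.eq_bot_of_le_smul_of_le_jacobson_bot 𝔪 𝔪
      (IsNoetherian.noetherian _) h2 (IsLocalRing.maximalIdeal_le_jacobson _)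
    have : (⊥ : Ideal S).IsPrime := hbot ▸ inferInstance
    exact hmin (hbot ▸ ⟨⟨this, bot_le⟩, fun _ _ _ => bot_le⟩)
  have avoidance := Ideal.subset_union_prime_finite (f := id) (I := 𝔪)
    (s := insert (𝔪 * 𝔪) (minimalPrimes S))
    ((minimalPrimes.finite_of_isNoetherianRing S).insert _) (𝔪 * 𝔪) (𝔪 * 𝔪)
    (fun q hq hne _ => (hq.resolve_left hne).1.1)
  by_contra! hcon
  obtain ⟨q, rfl | hq, hle⟩ := avoidance.1 fun x hx => by
    by_cases hx2 : x ∈ 𝔪 * 𝔪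
    · exact Set.mem_biUnion (Set.mem_insert _ _) hx2
    · obtain ⟨q, hq, hxq⟩ := hcon x hx hx2
      exact Set.mem_biUnion (Set.mem_insert_of_mem _ hq) hxq
  · exact hsq hle
  · exact hmin (le_antisymm (IsLocalRing.le_maximalIdeal hq.1.1.ne_top) hle ▸ hq)

omit [IsNoetherianRing S] in
lemma exists_le_span_insert_erase [DecidableEq S] {s : Finset S} (hs : Ideal.span (s : Set S) = 𝔪)
    {x : S} (hx : x ∈ 𝔪) (hx2 : x ∉ 𝔪 * 𝔪) :
    ∃ y ∈ s, 𝔪 ≤ Ideal.span (insert x (s.erase y : Set S)) := by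
  obtain ⟨a, -, ha⟩ := Submodule.mem_span_finset.1 (hs ▸ hx : x ∈ Ideal.span (s : Set S))
  obtain ⟨y, hys, hay⟩ : ∃ y ∈ s, IsUnit (a y) := by
    by_contra! hcon
    exact hx2 (ha ▸ Ideal.sum_mem _ fun i hi =>
      Ideal.mul_mem_mul (hcon i hi) (hs ▸ Ideal.subset_span hi))
  have herase : ∀ z ∈ s, z ≠ y → z ∈ Ideal.span (insert x (s.erase y : Set S)) :=
    fun z hz hzy => Ideal.subset_span (.inr (Finset.mem_erase.2 ⟨hzy, hz⟩))
  refine ⟨y, hys, hs ▸ Ideal.span_le.2 fun z hz => ?_⟩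
  by_cases hzy : z = y
  · rw [← Finset.add_sum_erase _ _ hys] at ha
    have hay_mem : a y * y ∈ Ideal.span (insert x (s.erase y : Set S)) := by
      rw [← smul_eq_mul, eq_sub_of_add_eq ha]
      exact sub_mem (Ideal.subset_span (.inl rfl)) (Ideal.sum_mem _ fun i hi =>
        Ideal.mul_mem_left _ _ (herase i (Finset.mem_of_mem_erase hi) (Finset.ne_of_mem_erase hi)))
    rw [hzy]
    exact (Ideal.unit_mul_mem_iff_mem _ hay).1 hay_mem
  · exact herase z hz hzy

lemma isDomain_of_isPrime_span_singleton {x : S} (hx : x ∈ 𝔪)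
    (hxmin : ∀ q ∈ minimalPrimes S, x ∉ q) (hprime : (Ideal.span {x}).IsPrime) : IsDomain S := by
  obtain ⟨q, hq, hqx⟩ := Ideal.exists_minimalPrimes_le (I := ⊥) (J := Ideal.span {x}) bot_le
  have hq_prime : q.IsPrime := hq.1.1
  -- Nakayama: an element `x c` of `q` has `c ∈ q`, so `q = x q`.
  have hq_bot : q = ⊥ := by
    refine Submodule.eq_bot_of_le_smul_of_le_jacobson_bot 𝔪 q (IsNoetherian.noetherian _)
      (fun z hz => ?_) (IsLocalRing.maximalIdeal_le_jacobson _)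
    obtain ⟨c, rfl⟩ := Ideal.mem_span_singleton'.1 (hqx hz)
    rw [mul_comm]
    exact Submodule.smul_mem_smul hx ((hq_prime.mem_or_mem hz).resolve_right (hxmin q hq))
  subst hq_bot
  exact IsDomain.of_bot_isPrime S

omit [IsNoetherianRing S] in
lemma span_image_erase_eq_maximalIdeal [DecidableEq S] {s : Finset S}
    (hs : Ideal.span (s : Set S) = 𝔪) {x y : S} [IsLocalRing (S ⧸ Ideal.span {x})]
    [DecidableEq (S ⧸ Ideal.span {x})]
    (hy : 𝔪 ≤ Ideal.span (insert x (s.erase y : Set S))) :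
    Ideal.span ((s.erase y).image (Ideal.Quotient.mk (Ideal.span {x})) : Set _) =
      IsLocalRing.maximalIdeal (S ⧸ Ideal.span {x}) := by
  rw [Finset.coe_image, ← Ideal.map_span, maximalIdeal_quotient]
  refine le_antisymm (Ideal.map_mono (hs ▸ Ideal.span_mono (Finset.erase_subset y s))) ?_
  have h := Ideal.map_mono (f := Ideal.Quotient.mk (Ideal.span {x})) hy
  rwa [Ideal.span_insert, Ideal.map_sup, Ideal.map_quotient_self, bot_sup_eq] at h

lemma le_ringKrullDim_quotient_span_singleton {x : S} (hx : x ∈ 𝔪) {d : ℕ}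
    (hd : ((d + 1 : ℕ) : WithBot ℕ∞) ≤ ringKrullDim S) :
    (d : WithBot ℕ∞) ≤ ringKrullDim (S ⧸ Ideal.span {x}) := by
  have h := hd.trans (ringKrullDim_le_ringKrullDim_quotient_add_card ({x} : Finset S)
    (by simpa [IsLocalRing.ringJacobson_eq_maximalIdeal] using hx))
  rw [Finset.coe_singleton] at h
  exact ENat.WithBot.add_le_add_one_right_iff.1 (by simpa using h)

lemma isIteratedRegular_and_isDomain (d : ℕ) (S : Type u) [CommRing S] [IsLocalRing S]
    [IsNoetherianRing S] (s : Finset S) (hs : Ideal.span (s : Set S) = IsLocalRing.maximalIdeal S)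
    (hcard : s.card ≤ d) (hdim : (d : WithBot ℕ∞) ≤ ringKrullDim S) :
    IsIteratedRegular d S ∧ IsDomain S := by
  classical
  induction d generalizing S with
  | zero =>
    obtain rfl : s = ∅ := by simpa using hcard
    have hS : IsField S := by
      rw [IsLocalRing.isField_iff_maximalIdeal_eq, ← hs]
      simp
    exact ⟨hS, hS.isDomain⟩
  | succ d ih =>
    obtain ⟨x, hx, hx2, hxmin⟩ := exists_mem_maximalIdeal_notMem_sq_notMem_minimalPrimes
      (S := S) (lt_of_lt_of_le (by exact_mod_cast d.succ_pos) hdim)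
    have := isLocalRing_quotient_span_singleton hx
    obtain ⟨y, hys, hy⟩ := exists_le_span_insert_erase hs hx hx2
    obtain ⟨hreg, hdom⟩ := ih (S ⧸ Ideal.span {x}) _ (span_image_erase_eq_maximalIdeal hs hy)
      (Finset.card_image_le.trans (by rw [Finset.card_erase_of_mem hys]; lia))
      (le_ringKrullDim_quotient_span_singleton hx hdim)
    have := isDomain_of_isPrime_span_singleton hx hxmin
      ((Ideal.Quotient.isDomain_iff_prime _).1 hdom)
    have hx0 : x ≠ 0 := fun h => hx2 (h ▸ zero_mem _)
    exact ⟨⟨inferInstance, inferInstance, x, hx, .of_ne_zero hx0, hreg⟩, this⟩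

lemma IsRegLocalRing.exists_isIteratedRegular {S : Type u} [CommRing S] [IsLocalRing S]
    (h : IsRegLocalRing S) : ∃ d, IsIteratedRegular d S := by
  obtain ⟨_, s, hs, hdim⟩ := h
  exact ⟨s.card, (isIteratedRegular_and_isDomain s.card S s hs le_rfl hdim.ge).1⟩

end RegularLocalRing

section SyzygyPreimage

variable {A : Type u} [CommRing A] {M U V : Type u} [AddCommGroup M] [Module A M]
  [AddCommGroup U] [Module A U] [AddCommGroup V] [Module A V] {𝒳 : Set (ModuleCat.{u} A)}

/-- The finitely generated modules with a first syzygy in `𝒳`. -/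
def syzygyPreimage (𝒳 : Set (ModuleCat.{u} A)) : Set (ModuleCat.{u} A) :=
  {L | ∃ (n : ℕ) (π : (Fin n → A) →ₗ[A] L), Function.Surjective π ∧
    ModuleCat.of A (LinearMap.ker π) ∈ 𝒳}

namespace IsResolving

variable [IsNoetherianRing A]

lemma ker_mem_of_ker_mem (h : IsResolving A 𝒳) {u : U →ₗ[A] M} {v : V →ₗ[A] M}
    (hu : Function.Surjective u) (hv : Function.Surjective v) (hU : ModuleCat.of A U ∈ 𝒳)
    (hV : ModuleCat.of A V ∈ 𝒳) (hK : ModuleCat.of A (LinearMap.ker u) ∈ 𝒳) :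
    ModuleCat.of A (LinearMap.ker v) ∈ 𝒳 := by
  have hs := isSES_pullbackFst u hv
  have hpullback := h.isExtClosed.mem_of_isSES (isSES_pullbackSnd hu v) hK hV
  exact h.isExtClosed.mem_of_equiv hs.kerEquiv.symm (h.ker_mem hs.2.1 hpullback hU)

lemma mem_syzygyPreimage_iff (h : IsResolving A 𝒳) {g : U →ₗ[A] M} (hg : Function.Surjective g)
    (hU : ModuleCat.of A U ∈ 𝒳) :
    ModuleCat.of A M ∈ syzygyPreimage 𝒳 ↔ ModuleCat.of A (LinearMap.ker g) ∈ 𝒳 := by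
  have := h.finite hU
  have := Module.Finite.of_surjective g hg
  constructor
  · rintro ⟨n, π, hπ, hK⟩
    exact h.ker_mem_of_ker_mem hπ hg (h.of_projective_mem _) hU hK
  · intro hK
    obtain ⟨n, π, hπ⟩ := Module.Finite.exists_fin' A M
    exact ⟨n, π, hπ, h.ker_mem_of_ker_mem hg hπ hU (h.of_projective_mem _) hK⟩

lemma subset_syzygyPreimage (h : IsResolving A 𝒳) : 𝒳 ⊆ syzygyPreimage 𝒳 := by
  intro M hM
  have := h.finite hM
  obtain ⟨n, π, hπ⟩ := Module.Finite.exists_fin' A M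
  exact ⟨n, π, hπ, h.ker_mem_of_projective hπ hM⟩

lemma isExtClosed_syzygyPreimage (h : IsResolving A 𝒳) : IsExtClosed A (syzygyPreimage 𝒳) := by
  refine ⟨?_, ?_, ?_⟩
  · rintro M N ⟨e⟩ ⟨n, π, hπ, hK⟩
    exact ⟨n, e ∘ₗ π, e.surjective.comp hπ, by rwa [LinearEquiv.ker_comp]⟩
  · rintro M N hMN
    obtain ⟨n, π, hπ, -⟩ := id hMN
    have := Module.Finite.of_surjective (LinearMap.fst A M N ∘ₗ π) (Prod.fst_surjective.comp hπ)
    have := Module.Finite.of_surjective (LinearMap.snd A M N ∘ₗ π) (Prod.snd_surjective.comp hπ)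
    obtain ⟨a, α, hα⟩ := Module.Finite.exists_fin' A M
    obtain ⟨b, β, hβ⟩ := Module.Finite.exists_fin' A N
    have hs := (isSES_ker_subtype hα).prodMap (isSES_ker_subtype hβ)
    have hK := (h.mem_syzygyPreimage_iff hs.2.1 (h.of_projective_mem _)).1 hMN
    exact ⟨a, α, hα, h.isExtClosed.mem_of_prod
      (h.isExtClosed.mem_of_equiv hs.kerEquiv.symm hK)⟩
  · rintro K P M f g hs ⟨a, α, hα, hK⟩ hM
    have hg := hs.2.1
    obtain ⟨b, β, hβ, -⟩ := id hM
    have : Module.Finite A P := by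
      have := Module.Finite.of_surjective α hα
      have := Module.Finite.of_surjective β hβ
      exact Module.Finite.of_exact hs.exact hg
    obtain ⟨n, π, hπ⟩ := Module.Finite.exists_fin' A P
    have hcomp := isSES_ker_comp π hπ g
    have hU := (h.mem_syzygyPreimage_iff (g := g ∘ₗ π) (hg.comp hπ) (h.of_projective_mem _)).1 hM
    have hker : ModuleCat.of A (LinearMap.ker g) ∈ syzygyPreimage 𝒳 :=
      ⟨a, hs.kerEquiv ∘ₗ α, hs.kerEquiv.surjective.comp hα, by rwa [LinearEquiv.ker_comp]⟩
    exact ⟨n, π, hπ, h.isExtClosed.mem_of_equiv hcomp.kerEquiv.symm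
      ((h.mem_syzygyPreimage_iff hcomp.2.1 hU).1 hker)⟩

lemma isResolving_syzygyPreimage (h : IsResolving A 𝒳) : IsResolving A (syzygyPreimage 𝒳) := by
  refine h.isExtClosed_syzygyPreimage.isResolving ?_
    (h.subset_syzygyPreimage (h.of_projective_mem A)) ?_
  · rintro M ⟨n, π, hπ, -⟩
    exact Module.Finite.of_surjective π hπ
  · rintro M ⟨n, π, hπ, hK⟩
    exact ⟨n, π, hπ, h.subset_syzygyPreimage hK⟩

lemma quotient_span_singleton_mem_syzygyPreimage (h : IsResolving A 𝒳) {x : A}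
    (hx : IsSMulRegular A x) : ModuleCat.of A (A ⧸ Ideal.span {x}) ∈ syzygyPreimage 𝒳 := by
  have hinj : Function.Injective (LinearMap.toSpanSingleton A A x) := fun a b hab =>
    hx (by simpa [mul_comm] using hab)
  have hs : IsSES (LinearMap.toSpanSingleton A A x) (Submodule.mkQ (Ideal.span {x})) :=
    ⟨hinj, Submodule.mkQ_surjective _, by
      rw [LinearMap.range_toSpanSingleton, Submodule.ker_mkQ]⟩
  exact (h.mem_syzygyPreimage_iff hs.2.1 (h.of_projective_mem A)).2
    (h.isExtClosed.mem_of_equiv hs.kerEquiv (h.of_projective_mem A))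

end IsResolving

lemma nonempty_pullbackSMul_equiv_ker {x : A} (hx : IsSMulRegular M x) (π : U →ₗ[A] M)
    {q : M →ₗ[A] V} (hq : ∀ m, q m = 0 ↔ ∃ m', x • m' = m) :
    Nonempty (pullbackSMul π x ≃ₗ[A] LinearMap.ker (q ∘ₗ π)) := by
  have hinj : Function.Injective (pullbackSnd (x • LinearMap.id) π) := by
    rintro ⟨⟨m, v⟩, hz⟩ ⟨⟨m', v'⟩, hz'⟩ (rfl : v = v')
    obtain rfl : m = m' := hx ((mem_pullback.1 hz).trans (mem_pullback.1 hz').symm)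
    rfl
  refine ⟨(LinearEquiv.ofInjective _ hinj).trans (LinearEquiv.ofEq _ _ ?_)⟩
  ext v
  rw [LinearMap.mem_ker, LinearMap.comp_apply, hq]
  constructor
  · rintro ⟨⟨⟨m, v⟩, hz⟩, rfl⟩
    exact ⟨m, mem_pullback.1 hz⟩
  · rintro ⟨m, hm⟩
    exact ⟨⟨(m, v), mem_pullback.2 hm⟩, rfl⟩

lemma IsResolving.quotSMulTop_mem_syzygyPreimage_iff [IsNoetherianRing A] [Module.Finite A U]
    [Module.Projective A U] (h : IsResolving A 𝒳) {x : A} (hx : IsSMulRegular M x)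
    {π : U →ₗ[A] M} (hπ : Function.Surjective π) :
    ModuleCat.of A (QuotSMulTop x M) ∈ syzygyPreimage 𝒳 ↔
      ModuleCat.of A (pullbackSMul π x) ∈ 𝒳 := by
  obtain ⟨e⟩ := nonempty_pullbackSMul_equiv_ker hx π (q := Submodule.mkQ _)
    fun _ => quotSMulTop_mk_eq_zero_iff
  rw [h.mem_syzygyPreimage_iff (g := Submodule.mkQ _ ∘ₗ π)
    ((Submodule.mkQ_surjective _).comp hπ) (h.of_projective_mem U)]
  exact ⟨h.isExtClosed.mem_of_equiv e.symm, h.isExtClosed.mem_of_equiv e⟩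

end SyzygyPreimage

section RestrictScalars

variable {S : Type u} [CommRing S] (B : Type u) [CommRing B] [Algebra S B]
  {𝒳 : Set (ModuleCat.{u} S)}

/-- The modules over an `S`-algebra `B` that lie in `𝒳` as `S`-modules. -/
def restrictScalarsPreimage (𝒳 : Set (ModuleCat.{u} S)) : Set (ModuleCat.{u} B) :=
  {L | (ModuleCat.restrictScalars (algebraMap S B)).obj L ∈ 𝒳}

variable {B}

lemma IsExtClosed.mem_restrictScalarsPreimage_iff (h : IsExtClosed S 𝒳) {L : Type u}
    [AddCommGroup L] [Module S L] [Module B L] [IsScalarTower S B L] :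
    ModuleCat.of B L ∈ restrictScalarsPreimage B 𝒳 ↔ ModuleCat.of S L ∈ 𝒳 := by
  let X := (ModuleCat.restrictScalars (algebraMap S B)).obj (ModuleCat.of B L)
  let e : L ≃ₗ[S] X := { AddEquiv.refl L with map_smul' := fun s l => (algebraMap_smul B s l).symm }
  exact ⟨h.mem_of_equiv (M := X) e.symm, h.mem_of_equiv (N := X) e⟩

lemma IsExtClosed.isExtClosed_restrictScalarsPreimage (h : IsExtClosed S 𝒳) :
    IsExtClosed B (restrictScalarsPreimage B 𝒳) := by
  let res := ModuleCat.restrictScalars (algebraMap S B)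
  refine ⟨?_, fun M N hMN => h.2.1 (res.obj M) (res.obj N) hMN, ?_⟩
  · rintro M N ⟨e⟩ hM
    exact h.1 _ _ ⟨(res.mapIso e.toModuleIso).toLinearEquiv⟩ hM
  · intro K P M f g hs hK hM
    exact h.2.2 _ _ _ (res.map (ModuleCat.ofHom f)).hom (res.map (ModuleCat.ofHom g)).hom
      ⟨hs.1, hs.2.1, Submodule.ext fun x => SetLike.ext_iff.1 hs.2.2 x⟩ hK hM

lemma IsResolving.isResolving_restrictScalarsPreimage [IsNoetherianRing S] (h : IsResolving S 𝒳)
    (hB : ModuleCat.of S B ∈ 𝒳) : IsResolving B (restrictScalarsPreimage B 𝒳) := by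
  have hfg : ∀ M ∈ restrictScalarsPreimage B 𝒳, Module.Finite B M := by
    intro M hM
    let _ : Module S M := Module.compHom M (algebraMap S B)
    have : IsScalarTower S B M := IsScalarTower.of_algebraMap_smul fun _ _ => rfl
    have : Module.Finite S M := h.finite (M := M) hM
    exact Module.Finite.of_restrictScalars_finite S B M
  refine h.isExtClosed.isExtClosed_restrictScalarsPreimage.isResolving hfg
    (h.isExtClosed.mem_restrictScalarsPreimage_iff.2 hB) fun M hM => ?_
  have := hfg M hM
  let _ : Module S M := Module.compHom M (algebraMap S B)
  have : IsScalarTower S B M := IsScalarTower.of_algebraMap_smul fun _ _ => rfl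
  obtain ⟨n, π, hπ⟩ := Module.Finite.exists_fin' B M
  have hK : ModuleCat.of S (LinearMap.ker π) ∈ 𝒳 :=
    h.ker_mem (g := π.restrictScalars S) hπ (h.isExtClosed.pi_mem hB n) hM
  exact ⟨n, π, hπ, h.isExtClosed.mem_restrictScalarsPreimage_iff.2 hK⟩

end RestrictScalars

section Torsion

variable {S : Type u} [CommRing S] {Y N : Type u} [AddCommGroup Y] [Module S Y]
  [AddCommGroup N] [Module S N]

lemma map_mem_torsion (f : Y →ₗ[S] N) {y : Y} (hy : y ∈ Submodule.torsion S Y) :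
    f y ∈ Submodule.torsion S N := by
  obtain ⟨a, ha⟩ := (Submodule.mem_torsion_iff y).1 hy
  exact (Submodule.mem_torsion_iff _).2 ⟨a, by
    rw [Submonoid.smul_def] at ha ⊢; rw [← map_smul, ha, map_zero]⟩

lemma torsion_pi_self_eq_bot (ι : Type*) : Submodule.torsion S (ι → S) = ⊥ := by
  refine (Submodule.eq_bot_iff _).2 fun v hv => ?_
  obtain ⟨a, ha⟩ := (Submodule.mem_torsion_iff v).1 hv
  exact funext fun i => (mem_nonZeroDivisors_iff.1 a.2).1 _ (congrFun ha i)

lemma stableAnnihilator_le_annihilator_torsion :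
    stableAnnihilator S Y ≤ Module.annihilator S (Submodule.torsion S Y) := by
  rintro t ⟨n, s, f, h⟩
  refine Module.mem_annihilator.2 fun y => Subtype.ext ?_
  have hy : s y = 0 := by simpa [torsion_pi_self_eq_bot] using map_mem_torsion s y.2
  simpa [hy] using (LinearMap.congr_fun h y).symm

lemma stableAnnihilator_le_quotient_torsion :
    stableAnnihilator S Y ≤ stableAnnihilator S (Y ⧸ Submodule.torsion S Y) := by
  rintro t ⟨n, s, f, h⟩
  refine ⟨n, (Submodule.torsion S Y).liftQ s fun y hy => ?_,
    (Submodule.torsion S Y).mkQ ∘ₗ f, ?_⟩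
  · simpa [torsion_pi_self_eq_bot] using map_mem_torsion s hy
  · refine Submodule.linearMap_qext _ (LinearMap.ext fun y => ?_)
    exact congrArg (Submodule.torsion S Y).mkQ (LinearMap.congr_fun h y)

lemma isSMulRegular_of_torsion_eq_bot (h : Submodule.torsion S Y = ⊥) {x : S}
    (hx : IsSMulRegular S x) : IsSMulRegular Y x := by
  refine .of_right_eq_zero_of_smul fun y hy => ?_
  have hx' : x ∈ nonZeroDivisors S :=
    mem_nonZeroDivisors_iff_right.2 fun s hs => hx (by simpa [mul_comm] using hs)
  have hy' : y ∈ Submodule.torsion S Y := (Submodule.mem_torsion_iff y).2 ⟨⟨x, hx'⟩, hy⟩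
  simpa [h] using hy'

lemma isSES_torsion (N : Type u) [AddCommGroup N] [Module S N] :
    IsSES (Submodule.torsion S N).subtype (Submodule.torsion S N).mkQ :=
  ⟨Subtype.val_injective, Submodule.mkQ_surjective _, by simp⟩

lemma annihilator_le_stableAnnihilator :
    Module.annihilator S Y ≤ stableAnnihilator S Y := fun _ ht =>
  ⟨0, 0, 0, LinearMap.ext fun y => (Module.mem_annihilator.1 ht y).symm⟩

lemma nontrivial_torsionBy_of_mem_radical_annihilator [Nontrivial Y] {t : S}
    (ht : t ∈ (Module.annihilator S Y).radical) : Nontrivial (Submodule.torsionBy S Y t) := by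
  obtain ⟨a, ha⟩ := ht
  by_contra hsub
  have hbot : Submodule.torsionBy S Y t = ⊥ := by
    rwa [Submodule.nontrivial_iff_ne_bot, not_not] at hsub
  have hreg : IsSMulRegular Y t := .of_right_eq_zero_of_smul fun y hy => by
    simpa [hbot] using (Submodule.mem_torsionBy_iff t y).2 hy
  obtain ⟨y, hy⟩ := exists_ne (0 : Y)
  exact hy (hreg.pow a (by simpa using Module.mem_annihilator.1 ha y))

end Torsion

section PuncturedSpectrum

variable (S : Type u) [CommRing S] [IsLocalRing S] (Y : Type u) [AddCommGroup Y] [Module S Y]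

local notation "𝔪" => IsLocalRing.maximalIdeal S

/-- `Y` is free on the punctured spectrum of the local ring `S`, expressed by its stable
annihilator: some power of the maximal ideal acts on `Y` through finite free modules. -/
def FreeOnPuncturedSpectrum : Prop := 𝔪 ≤ (stableAnnihilator S Y).radical

variable {S Y}

namespace FreeOnPuncturedSpectrum

lemma of_le_radical_annihilator (h : 𝔪 ≤ (Module.annihilator S Y).radical) :
    FreeOnPuncturedSpectrum S Y :=
  h.trans (Ideal.radical_mono annihilator_le_stableAnnihilator)

lemma le_radical_annihilator_torsion (h : FreeOnPuncturedSpectrum S Y) :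
    𝔪 ≤ (Module.annihilator S (Submodule.torsion S Y)).radical :=
  h.trans (Ideal.radical_mono stableAnnihilator_le_annihilator_torsion)

lemma quotient_torsion (h : FreeOnPuncturedSpectrum S Y) :
    FreeOnPuncturedSpectrum S (Y ⧸ Submodule.torsion S Y) :=
  h.trans (Ideal.radical_mono stableAnnihilator_le_quotient_torsion)

lemma quotSMulTop (h : FreeOnPuncturedSpectrum S Y) (x : S)
    [IsLocalRing (S ⧸ Ideal.span {x})] :
    FreeOnPuncturedSpectrum (S ⧸ Ideal.span {x}) (QuotSMulTop x Y) :=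
  maximalIdeal_quotient_le_radical h (map_stableAnnihilator_le x Y)

lemma pullbackSMul {n : ℕ} {π : (Fin n → S) →ₗ[S] Y} (h : FreeOnPuncturedSpectrum S Y)
    (hπ : Function.Surjective π) (x : S) :
    FreeOnPuncturedSpectrum S (pullbackSMul π x) :=
  h.trans (le_sup_left.trans (radical_stableAnnihilator_sup_span_le hπ x))

lemma ker {n : ℕ} {π : (Fin n → S) →ₗ[S] Y} (h : FreeOnPuncturedSpectrum S Y)
    (hπ : Function.Surjective π) : FreeOnPuncturedSpectrum S (LinearMap.ker π) :=
  h.trans (Ideal.radical_mono (stableAnnihilator_le_ker hπ))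

lemma torsion_eq_bot [IsNoetherianRing S] [Module.Finite S Y] (h : FreeOnPuncturedSpectrum S Y)
    {d j : ℕ} (hS : IsIteratedRegular d S) (hj : j < d) (hY : PdLE S j Y) :
    Submodule.torsion S Y = ⊥ := by
  by_contra hne
  have : Nontrivial (Submodule.torsion S Y) := Submodule.nontrivial_iff_ne_bot.2 hne
  obtain ⟨P, hP⟩ := associatedPrimes.nonempty S (Submodule.torsion S Y)
  obtain ⟨hprime, z, rfl⟩ := isAssociatedPrime_iff.1 hP
  have hle := h.le_radical_annihilator_torsion.trans (hprime.radical_le_iff.2 fun t ht =>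
    Submodule.mem_colon_singleton.2 (Module.mem_annihilator.1 ht z))
  have hz : (z : Y) = 0 := hS.eq_zero_of_maximalIdeal_smul_eq_zero hj hY fun t ht =>
    congrArg Subtype.val (Submodule.mem_colon_singleton.1 (hle ht))
  exact hprime.ne_top (by simp [show z = 0 from Subtype.ext hz])

end FreeOnPuncturedSpectrum

end PuncturedSpectrum

section FiniteLength

variable {S : Type u} [CommRing S] [IsLocalRing S] [IsNoetherianRing S]
  {𝒴 : Set (ModuleCat.{u} S)} {T N : Type u} [AddCommGroup T] [Module S T]
  [AddCommGroup N] [Module S N]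

local notation "𝔪" => IsLocalRing.maximalIdeal S

/-- Every member of `𝒴` that is free on the punctured spectrum has its torsion submodule in `𝒴`. -/
def ContainsTorsion (𝒴 : Set (ModuleCat.{u} S)) : Prop :=
  ∀ (Y : Type u) [AddCommGroup Y] [Module S Y], ModuleCat.of S Y ∈ 𝒴 →
    FreeOnPuncturedSpectrum S Y → ModuleCat.of S (Submodule.torsion S Y) ∈ 𝒴

lemma IsResolving.torsionBy_mem (h : IsResolving S 𝒴) (htors : ContainsTorsion 𝒴) {x : S}
    (hx : x ∈ 𝔪) (hxS : IsSMulRegular S x) (hT : 𝔪 ≤ (Module.annihilator S T).radical)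
    (hT𝒴 : ModuleCat.of S T ∈ 𝒴) (t : S) : ModuleCat.of S (Submodule.torsionBy S T t) ∈ 𝒴 := by
  have := h.finite hT𝒴
  obtain ⟨n, π, hπ⟩ := Module.Finite.exists_fin' S T
  have hE := htors _ (h.pullbackSMul_mem hπ t hT𝒴)
    ((FreeOnPuncturedSpectrum.of_le_radical_annihilator hT).pullbackSMul hπ t)
  obtain ⟨a, ha⟩ := hT hx
  have hxa : x ^ a ∈ nonZeroDivisors S :=
    mem_nonZeroDivisors_iff_right.2 fun s hs => hxS.pow a (by simpa [mul_comm] using hs)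
  have mem_pullbackSMul (y : Submodule.torsionBy S T t) :
      ((y, 0) : T × (Fin n → S)) ∈ pullbackSMul π t :=
    mem_pullback.2 (by simp)
  have mem_torsion (y : Submodule.torsionBy S T t) :
      ⟨_, mem_pullbackSMul y⟩ ∈ Submodule.torsion S (pullbackSMul π t) :=
    (Submodule.mem_torsion_iff _).2 ⟨⟨x ^ a, hxa⟩, Subtype.ext
      (Prod.ext (Module.mem_annihilator.1 ha (y : T)) (smul_zero _))⟩
  refine h.isExtClosed.mem_of_retract
    (((LinearMap.inl S T (Fin n → S) ∘ₗ (Submodule.torsionBy S T t).subtype).codRestrict _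
      mem_pullbackSMul).codRestrict _ mem_torsion)
    ((LinearMap.fst S T _ ∘ₗ Submodule.subtype _ ∘ₗ Submodule.subtype _).codRestrict _ ?_)
    (LinearMap.ext fun _ => rfl) hE
  rintro ⟨⟨⟨y, v⟩, hz⟩, hzt⟩
  have hv : v = 0 := by
    have hv' := map_mem_torsion (pullbackSnd (t • LinearMap.id) π) hzt
    rwa [torsion_pi_self_eq_bot] at hv'
  simpa [hv] using mem_pullback.1 hz

lemma IsResolving.exists_mem_le_annihilator (h : IsResolving S 𝒴) (htors : ContainsTorsion 𝒴)
    {x : S} (hx : x ∈ 𝔪) (hxS : IsSMulRegular S x) [Nontrivial T]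
    (hT : 𝔪 ≤ (Module.annihilator S T).radical) (hT𝒴 : ModuleCat.of S T ∈ 𝒴) :
    ∃ (T' : Type u) (_ : AddCommGroup T') (_ : Module S T'), Nontrivial T' ∧
      𝔪 ≤ Module.annihilator S T' ∧ ModuleCat.of S T' ∈ 𝒴 := by
  classical
  obtain ⟨s, hs⟩ := IsNoetherian.noetherian 𝔪
  suffices ∀ s : Finset S, (s : Set S) ⊆ 𝔪 → ∃ (T' : Type u) (_ : AddCommGroup T')
      (_ : Module S T'), Nontrivial T' ∧ 𝔪 ≤ (Module.annihilator S T').radical ∧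
      (s : Set S) ⊆ Module.annihilator S T' ∧ ModuleCat.of S T' ∈ 𝒴 by
    obtain ⟨T', _, _, hnontrivial, -, hsT', hT'⟩ := this s (hs ▸ Submodule.subset_span)
    exact ⟨T', _, _, hnontrivial, hs ▸ Submodule.span_le.2 hsT', hT'⟩
  intro s
  induction s using Finset.induction_on with
  | empty => exact fun _ => ⟨T, _, _, inferInstance, hT, by simp, hT𝒴⟩
  | insert t s _ ih =>
    intro hts
    rw [Finset.coe_insert, Set.insert_subset_iff] at hts
    obtain ⟨T', _, _, _, hrad, hsT', hT'⟩ := ih hts.2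
    have hle : Module.annihilator S T' ≤ Module.annihilator S (Submodule.torsionBy S T' t) :=
      (Submodule.subtype _).annihilator_le_of_injective Subtype.val_injective
    refine ⟨Submodule.torsionBy S T' t, _, _,
      nontrivial_torsionBy_of_mem_radical_annihilator (hrad hts.1),
      hrad.trans (Ideal.radical_mono hle), ?_, h.torsionBy_mem htors hx hxS hrad hT' t⟩
    rw [Finset.coe_insert, Set.insert_subset_iff]
    exact ⟨Module.mem_annihilator.2 fun y => Subtype.ext y.2, hsT'.trans hle⟩

omit [IsNoetherianRing S] in
lemma IsExtClosed.residueField_mem (h : IsExtClosed S 𝒴) [Nontrivial T]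
    (hT : 𝔪 ≤ Module.annihilator S T) (hT𝒴 : ModuleCat.of S T ∈ 𝒴) :
    ModuleCat.of S (S ⧸ 𝔪) ∈ 𝒴 := by
  have htors : Module.IsTorsionBySet S T (𝔪 : Set S) :=
    fun y t => Module.mem_annihilator.1 (hT t.2) y
  let _ : Module (S ⧸ 𝔪) T := htors.module
  have : IsScalarTower S (S ⧸ 𝔪) T := htors.isScalarTower
  let _ : Field (S ⧸ 𝔪) := Ideal.Quotient.field _
  obtain ⟨y, hy⟩ := exists_ne (0 : T)
  obtain ⟨r, hr⟩ := LinearMap.exists_leftInverse_of_injective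
    (LinearMap.toSpanSingleton (S ⧸ 𝔪) T y) (LinearMap.ker_toSpanSingleton _ hy)
  exact h.mem_of_retract ((LinearMap.toSpanSingleton (S ⧸ 𝔪) T y).restrictScalars S)
    (r.restrictScalars S) (LinearMap.ext fun c => LinearMap.congr_fun hr c) hT𝒴

lemma IsResolving.mem_of_residueField_mem (h : IsResolving S 𝒴)
    (hk : ModuleCat.of S (S ⧸ 𝔪) ∈ 𝒴) [Module.Finite S N]
    (hN : 𝔪 ≤ (Module.annihilator S N).radical) : ModuleCat.of S N ∈ 𝒴 := by
  revert hN
  induction ‹Module.Finite S N› using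
    IsNoetherianRing.induction_on_isQuotientEquivQuotientPrime S with
  | subsingleton N => exact fun _ => h.of_projective_mem N
  | quotient N p e =>
    intro hN
    rw [e.annihilator_eq, Ideal.annihilator_quotient, p.2.radical] at hN
    have hp : 𝔪 = p.1 := le_antisymm hN (IsLocalRing.le_maximalIdeal p.2.ne_top)
    exact h.isExtClosed.mem_of_equiv e.symm (hp ▸ hk)
  | exact N₁ N₂ N₃ f g hf hg hfg h₁ h₃ =>
    intro hN
    exact h.isExtClosed.mem_of_isSES (isSES_of_exact hf hg hfg)
      (h₁ (hN.trans (Ideal.radical_mono (f.annihilator_le_of_injective hf))))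
      (h₃ (hN.trans (Ideal.radical_mono (g.annihilator_le_of_surjective hg))))

end FiniteLength

section LocalTheorem

variable {S : Type u} [CommRing S] [IsLocalRing S] [IsNoetherianRing S]
  {𝒴 : Set (ModuleCat.{u} S)} {x : S} {d : ℕ} {Y N : Type u} [AddCommGroup Y] [Module S Y]
  [AddCommGroup N] [Module S N]

local notation "𝔪" => IsLocalRing.maximalIdeal S

lemma IsIteratedRegular.pdLE_of_isSMulRegular (hquot : IsIteratedRegular d (S ⧸ Ideal.span {x}))
    (hx : x ∈ 𝔪) (hxS : IsSMulRegular S x) [Module.Finite S Y] (hY : IsSMulRegular Y x) :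
    PdLE S d Y :=
  (pdLE_quotSMulTop_iff hx hxS hY d).1 (hquot.pdLE _)

/-- Membership in a resolving subcategory of modules over the local ring `S` is governed, among
modules free on the punctured spectrum, by the projective dimension alone. -/
def PdDeterminesResolving (S : Type u) [CommRing S] [IsLocalRing S] : Prop :=
  ∀ (𝒴 : Set (ModuleCat.{u} S)), IsResolving S 𝒴 → ∀ (Y N : Type u) [AddCommGroup Y] [Module S Y]
    [AddCommGroup N] [Module S N] [Module.Finite S N], ModuleCat.of S Y ∈ 𝒴 →
    FreeOnPuncturedSpectrum S Y → FreeOnPuncturedSpectrum S N →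
    (∀ j, PdLE S j Y → PdLE S j N) → ModuleCat.of S N ∈ 𝒴

variable [IsLocalRing (S ⧸ Ideal.span {x})]

lemma PdDeterminesResolving.mem_of_pdLE (hL : PdDeterminesResolving (S ⧸ Ideal.span {x}))
    (hS : IsIteratedRegular (d + 1) S) (hx : x ∈ 𝔪) (hxS : IsSMulRegular S x)
    (h : IsResolving S 𝒴) [Module.Finite S N] (hY : ModuleCat.of S Y ∈ 𝒴)
    (hYfree : FreeOnPuncturedSpectrum S Y) (hNfree : FreeOnPuncturedSpectrum S N)
    (hYN : ∀ j, PdLE S j Y → PdLE S j N) (hd : PdLE S d Y) : ModuleCat.of S N ∈ 𝒴 := by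
  have := h.finite hY
  have hYreg := isSMulRegular_of_torsion_eq_bot (hYfree.torsion_eq_bot hS d.lt_succ_self hd) hxS
  have hNreg := isSMulRegular_of_torsion_eq_bot
    (hNfree.torsion_eq_bot hS d.lt_succ_self (hYN d hd)) hxS
  obtain ⟨a, α, hα⟩ := Module.Finite.exists_fin' S Y
  obtain ⟨b, β, hβ⟩ := Module.Finite.exists_fin' S N
  have hsyz := h.isResolving_syzygyPreimage
  have hYx := (hsyz.isExtClosed.mem_restrictScalarsPreimage_iff (B := S ⧸ Ideal.span {x})).2
    ((h.quotSMulTop_mem_syzygyPreimage_iff hYreg hα).2 (h.pullbackSMul_mem hα x hY))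
  have hNx := hL _ (hsyz.isResolving_restrictScalarsPreimage
      (h.quotient_span_singleton_mem_syzygyPreimage hxS)) (QuotSMulTop x Y) (QuotSMulTop x N)
    hYx (hYfree.quotSMulTop x) (hNfree.quotSMulTop x) fun j hj =>
      (pdLE_quotSMulTop_iff hx hxS hNreg j).2 (hYN j ((pdLE_quotSMulTop_iff hx hxS hYreg j).1 hj))
  exact h.mem_of_pullbackSMul_mem hβ (hNfree hx)
    ((h.quotSMulTop_mem_syzygyPreimage_iff hNreg hβ).1
      (hsyz.isExtClosed.mem_restrictScalarsPreimage_iff.1 hNx))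

lemma PdDeterminesResolving.mem_of_not_pdLE (hL : PdDeterminesResolving (S ⧸ Ideal.span {x}))
    (hS : IsIteratedRegular (d + 1) S) (hx : x ∈ 𝔪) (hxS : IsSMulRegular S x)
    (h : IsResolving S 𝒴) [Module.Finite S N] (hY : ModuleCat.of S Y ∈ 𝒴)
    (hYfree : FreeOnPuncturedSpectrum S Y) (hNfree : FreeOnPuncturedSpectrum S N)
    (hd : ¬ PdLE S d Y) (hN : PdLE S d N) : ModuleCat.of S N ∈ 𝒴 := by
  have := h.finite hY
  obtain ⟨a, α, hα⟩ := Module.Finite.exists_fin' S Y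
  refine hL.mem_of_pdLE hS hx hxS h (h.ker_mem_of_projective hα hY) (hYfree.ker hα) hNfree
    (fun j hj => ?_) ((pdLE_succ_iff_ker hα).1 (hS.pdLE Y))
  by_cases hdj : d ≤ j
  · exact hN.mono hdj
  · exact absurd (((pdLE_succ_iff_ker hα).2 hj).mono (by lia)) hd

omit [IsNoetherianRing S] [IsLocalRing (S ⧸ Ideal.span {x})] in
theorem IsIteratedRegular.pdDeterminesResolving (hS : IsIteratedRegular d S) :
    PdDeterminesResolving S := by
  induction d generalizing S with
  | zero =>
    intro 𝒴 h Y N _ _ _ _ _ _ _ _ _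
    have := hS.isNoetherianRing
    have : Module.Projective S N := (pdLE_zero_iff).1 (hS.pdLE N)
    exact h.of_projective_mem N
  | succ d ih =>
    obtain ⟨_, _, x, hx, hxS, hquot⟩ := id hS
    have := isLocalRing_quotient_span_singleton hx
    intro 𝒴 h Y N _ _ _ _ _ hY hYfree hNfree hYN
    by_cases hd : PdLE S d Y
    · exact (ih hquot).mem_of_pdLE hS hx hxS h hY hYfree hNfree hYN hd
    have quotient_mem (N : Type u) [AddCommGroup N] [Module S N] [Module.Finite S N]
        (hN : FreeOnPuncturedSpectrum S N) :
        ModuleCat.of S (N ⧸ Submodule.torsion S N) ∈ 𝒴 :=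
      (ih hquot).mem_of_not_pdLE hS hx hxS h hY hYfree hN.quotient_torsion hd
        (hquot.pdLE_of_isSMulRegular hx hxS
          (isSMulRegular_of_torsion_eq_bot Submodule.QuotientTorsion.torsion_eq_bot hxS))
    have htors : ContainsTorsion 𝒴 := fun Y _ _ hY hYfree => by
      have := h.finite hY
      exact h.isExtClosed.mem_of_equiv (isSES_torsion Y).kerEquiv.symm
        (h.ker_mem (isSES_torsion Y).2.1 hY (quotient_mem Y hYfree))
    have := h.finite hY
    have : Nontrivial (Submodule.torsion S Y) := Submodule.nontrivial_iff_ne_bot.2 fun h0 =>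
      hd (hquot.pdLE_of_isSMulRegular hx hxS (isSMulRegular_of_torsion_eq_bot h0 hxS))
    obtain ⟨T, _, _, _, hT, hT𝒴⟩ := h.exists_mem_le_annihilator htors hx hxS
      hYfree.le_radical_annihilator_torsion (htors Y hY hYfree)
    exact h.isExtClosed.mem_of_isSES (isSES_torsion N)
      (h.mem_of_residueField_mem (h.isExtClosed.residueField_mem hT hT𝒴)
        hNfree.le_radical_annihilator_torsion) (quotient_mem N hNfree)

end LocalTheorem

section Pushout

variable {A : Type u} [CommRing A] {K P M K' M' F X Z : Type u}
  [AddCommGroup K] [Module A K] [AddCommGroup P] [Module A P] [AddCommGroup M] [Module A M]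
  [AddCommGroup K'] [Module A K'] [AddCommGroup M'] [Module A M']
  [AddCommGroup F] [Module A F] [AddCommGroup X] [Module A X] [AddCommGroup Z] [Module A Z]

lemma IsSES.comp_equiv {f : K →ₗ[A] P} {g : P →ₗ[A] M} (h : IsSES f g) (e : K' ≃ₗ[A] K)
    (e' : M ≃ₗ[A] M') : IsSES (f ∘ₗ e.toLinearMap) (e'.toLinearMap ∘ₗ g) :=
  ⟨h.1.comp e.injective, e'.surjective.comp h.2.1, by
    rw [LinearEquiv.range_comp, LinearEquiv.ker_comp, h.2.2]⟩

lemma exists_isSES_of_retract {f : K →ₗ[A] P} {g : P →ₗ[A] M} (h : IsSES f g) {i : K →ₗ[A] X}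
    {r : X →ₗ[A] K} (hr : r ∘ₗ i = LinearMap.id) {i' : M →ₗ[A] Z} {r' : Z →ₗ[A] M}
    (hr' : r' ∘ₗ i' = LinearMap.id) :
    ∃ (N : Type u) (_ : AddCommGroup N) (_ : Module A N) (f' : X →ₗ[A] P × N)
      (g' : P × N →ₗ[A] Z), IsSES f' g' :=
  ⟨_, _, _, _, _, (h.prodMap isSES_inl_snd).comp_equiv (retractEquiv hr) (retractEquiv hr').symm⟩

variable {i : K →ₗ[A] F} {π : F →ₗ[A] Z}

lemma isSES_pushout (h : IsSES i π) (k : K →ₗ[A] X) :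
    IsSES ((LinearMap.range (k.prod (-i))).mkQ ∘ₗ LinearMap.inl A X F)
      ((LinearMap.range (k.prod (-i))).liftQ (π ∘ₗ LinearMap.snd A X F) (by
        rintro _ ⟨y, rfl⟩
        simp [h.exact.apply_apply_eq_zero])) := by
  refine isSES_of_exact ((injective_iff_map_eq_zero _).2 fun x hx => ?_) (fun z => ?_) fun w => ?_
  · obtain ⟨y, hy⟩ := (Submodule.Quotient.mk_eq_zero _).1 hx
    obtain ⟨hky, hiy⟩ := Prod.ext_iff.1 hy
    obtain rfl : y = 0 := h.1 (by simpa using hiy)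
    simpa using hky.symm
  · obtain ⟨v, rfl⟩ := h.2.1 z
    exact ⟨Submodule.Quotient.mk (0, v), rfl⟩
  · constructor
    · induction w using Submodule.Quotient.induction_on with | H w =>
      intro hw
      obtain ⟨y, hy⟩ := (h.exact w.2).1 hw
      exact ⟨w.1 + k y, (Submodule.Quotient.eq _).2 ⟨y, by simp [hy, Prod.ext_iff]⟩⟩
    · rintro ⟨x, rfl⟩
      exact map_zero π

end Pushout

section LocalizedPushout

variable {A : Type u} [CommRing A] {S : Submonoid A} {K F X Z M : Type u}
  [AddCommGroup K] [Module A K] [AddCommGroup F] [Module A F] [AddCommGroup X] [Module A X]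
  [AddCommGroup Z] [Module A Z] [AddCommGroup M] [Module (Localization S) M]
  {i : K →ₗ[A] F} {π : F →ₗ[A] Z} {k : K →ₗ[A] X}
  {f : LocalizedModule S X →ₗ[Localization S] M} {g : M →ₗ[Localization S] LocalizedModule S Z}
  {σ : LocalizedModule S F →ₗ[Localization S] M}

/-- The map from the localization of `X × F` with components `f` and `σ`. -/
noncomputable def localizedCoprod (f : LocalizedModule S X →ₗ[Localization S] M)
    (σ : LocalizedModule S F →ₗ[Localization S] M) :
    LocalizedModule S (X × F) →ₗ[Localization S] M :=
  f ∘ₗ LocalizedModule.map S (LinearMap.fst A X F) +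
    σ ∘ₗ LocalizedModule.map S (LinearMap.snd A X F)

lemma localizedCoprod_map_prod {Y : Type u} [AddCommGroup Y] [Module A Y] (a : Y →ₗ[A] X)
    (b : Y →ₗ[A] F) (y : LocalizedModule S Y) :
    localizedCoprod f σ (LocalizedModule.map S (a.prod b) y) =
      f (LocalizedModule.map S a y) + σ (LocalizedModule.map S b y) := by
  conv_rhs => rw [← LinearMap.fst_prod a b, ← LinearMap.snd_prod a b, localizedModule_map_comp,
    localizedModule_map_comp]
  rfl

lemma localizedCoprod_surjective (hπ : Function.Surjective π) (h : IsSES f g)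
    (hσ : g ∘ₗ σ = LocalizedModule.map S π) : Function.Surjective (localizedCoprod f σ) := by
  intro m
  obtain ⟨v, hv⟩ := LocalizedModule.map_surjective S π hπ (g m)
  obtain ⟨x, hx⟩ := (h.exact (m - σ v)).1 (by
    rw [map_sub, ← LinearMap.comp_apply g, hσ, hv, sub_self])
  refine ⟨LocalizedModule.map S (LinearMap.id.prod 0) x +
    LocalizedModule.map S (LinearMap.prod 0 LinearMap.id) v, ?_⟩
  simp [localizedCoprod_map_prod, hx]

lemma exact_localizedCoprod (hs : IsSES i π) (h : IsSES f g)
    (hσ : g ∘ₗ σ = LocalizedModule.map S π)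
    (hk : f ∘ₗ LocalizedModule.map S k = σ ∘ₗ LocalizedModule.map S i) :
    Function.Exact (LocalizedModule.map S (k.prod (-i))) (localizedCoprod f σ) := by
  have hzero (y) : localizedCoprod f σ (LocalizedModule.map S (k.prod (-i)) y) = 0 := by
    have hy : f (LocalizedModule.map S k y) = σ (LocalizedModule.map S i y) :=
      LinearMap.congr_fun hk y
    rw [localizedCoprod_map_prod, hy, map_neg, LinearMap.neg_apply, map_neg, add_neg_cancel]
  refine fun z => ⟨fun hz => ?_, fun ⟨y, hy⟩ => hy ▸ hzero y⟩
  have hsnd : LocalizedModule.map S π (LocalizedModule.map S (LinearMap.snd A X F) z) = 0 := by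
    have hgz := congrArg g hz
    rwa [localizedCoprod, LinearMap.add_apply, map_add, map_zero, LinearMap.comp_apply,
      h.exact.apply_apply_eq_zero, zero_add, LinearMap.comp_apply, ← LinearMap.comp_apply g,
      hσ] at hgz
  obtain ⟨y, hy⟩ := ((hs.localized S).exact _).1 hsnd
  have hsnd' : LocalizedModule.map S (LinearMap.snd A X F)
      (z + LocalizedModule.map S (k.prod (-i)) y) = 0 := by
    rw [map_add, ← LinearMap.comp_apply, ← localizedModule_map_comp, LinearMap.snd_prod, map_neg,
      LinearMap.neg_apply, hy, add_neg_cancel]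
  obtain ⟨x, hx⟩ := ((isSES_inl_snd.localized S).exact _).1 hsnd'
  have hfx : f x = 0 := by
    have hΘ := congrArg (localizedCoprod f σ) hx
    rw [map_add, hz, hzero, add_zero, LinearMap.inl, localizedCoprod_map_prod] at hΘ
    simpa [localizedModule_map_id] using hΘ
  obtain rfl := h.1 (hfx.trans (map_zero f).symm)
  exact ⟨-y, by rw [map_neg, eq_comm, ← add_eq_zero_iff_eq_neg, ← hx, map_zero]⟩

lemma nonempty_localizedModule_pushout_equiv (hs : IsSES i π) (h : IsSES f g)
    (hσ : g ∘ₗ σ = LocalizedModule.map S π)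
    (hk : f ∘ₗ LocalizedModule.map S k = σ ∘ₗ LocalizedModule.map S i) :
    Nonempty (LocalizedModule S ((X × F) ⧸ LinearMap.range (k.prod (-i))) ≃ₗ[Localization S]
      M) := by
  have hW : Function.Exact (LocalizedModule.map S (k.prod (-i)))
      (LocalizedModule.map S (LinearMap.range (k.prod (-i))).mkQ) :=
    LocalizedModule.map_exact S _ _ (LinearMap.exact_map_mkQ_range _)
  let e := hW.linearEquivOfSurjective (LocalizedModule.map_surjective S _
    (Submodule.mkQ_surjective _))
  exact ⟨e.symm.trans ((exact_localizedCoprod hs h hσ hk).linearEquivOfSurjective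
    (localizedCoprod_surjective hs.2.1 h hσ))⟩

/-- Clearing denominators in a map from the kernel of a presentation of `Z`, an extension of
localizations becomes the localization of a pushout. -/
lemma exists_isSES_localizedModule_equiv [IsNoetherianRing A] [Module.Finite A Z] (h : IsSES f g) :
    ∃ (W : Type u) (_ : AddCommGroup W) (_ : Module A W) (f' : X →ₗ[A] W) (g' : W →ₗ[A] Z),
      IsSES f' g' ∧ Nonempty (LocalizedModule S W ≃ₗ[Localization S] M) := by
  obtain ⟨n, π, hπ⟩ := Module.Finite.exists_fin' A Z
  have hs := isSES_ker_subtype hπ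
  obtain ⟨σ, hσ⟩ := Module.projective_lifting_property g (LocalizedModule.map S π) h.2.1
  let i := LocalizedModule.map S (LinearMap.ker π).subtype
  have hrange (y) : (σ ∘ₗ i) y ∈ LinearMap.range f := by
    rw [h.2.2, LinearMap.mem_ker, ← LinearMap.comp_apply, ← LinearMap.comp_assoc, hσ]
    exact (hs.localized S).exact.apply_apply_eq_zero y
  obtain ⟨k, s, hk⟩ := exists_localizedModule_map_eq_smul S
    (LinearMap.codRestrictOfInjective (σ ∘ₗ i) f h.1 hrange)
  let c := LinearEquiv.smulOfUnit (M := LocalizedModule S X)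
    (IsLocalization.map_units (Localization S) s).unit
  refine ⟨_, _, _, _, _, isSES_pushout hs k, nonempty_localizedModule_pushout_equiv hs
    (h.comp_equiv c.symm (LinearEquiv.refl _ _)) hσ ?_⟩
  ext y
  have hy : LocalizedModule.map S k y = c (LinearMap.codRestrictOfInjective _ f h.1 hrange y) :=
    LinearMap.congr_fun hk y
  simp only [LinearMap.comp_apply, LinearEquiv.coe_coe, hy, LinearEquiv.symm_apply_apply]
  exact LinearMap.codRestrictOfInjective_comp_apply ..

end LocalizedPushout

section AddLocal

variable {A : Type u} [CommRing A] (S : Submonoid A)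

/-- The category `add 𝒳_S` of direct summands of localizations of members of `𝒳`; for `𝒳` closed
under finite direct sums there is no need to take sums of localizations. -/
def addLocal (𝒳 : Set (ModuleCat.{u} A)) : Set (ModuleCat.{u} (Localization S)) :=
  {N | ∃ X ∈ 𝒳, ∃ (i : N →ₗ[Localization S] LocalizedModule S X)
    (r : LocalizedModule S X →ₗ[Localization S] N), r ∘ₗ i = LinearMap.id}

variable {S} {𝒳 : Set (ModuleCat.{u} A)} {M X Z : Type u} [AddCommGroup M]
  [Module (Localization S) M] [AddCommGroup X] [Module A X] [AddCommGroup Z] [Module A Z]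

lemma localizedModule_mem_addLocal (hX : ModuleCat.of A X ∈ 𝒳) :
    ModuleCat.of (Localization S) (LocalizedModule S X) ∈ addLocal S 𝒳 :=
  ⟨_, hX, LinearMap.id, LinearMap.id, rfl⟩

lemma addLocal_of_retract {N N' : Type u} [AddCommGroup N] [Module (Localization S) N]
    [AddCommGroup N'] [Module (Localization S) N'] {i : N →ₗ[Localization S] N'}
    {r : N' →ₗ[Localization S] N} (hr : r ∘ₗ i = LinearMap.id)
    (hN : ModuleCat.of (Localization S) N' ∈ addLocal S 𝒳) :
    ModuleCat.of (Localization S) N ∈ addLocal S 𝒳 := by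
  obtain ⟨X, hX, i', r', hr'⟩ := hN
  exact ⟨X, hX, i' ∘ₗ i, r ∘ₗ r', by
    rw [LinearMap.comp_assoc, ← LinearMap.comp_assoc i, hr', LinearMap.id_comp, hr]⟩

lemma self_mem_addLocal (hA : ModuleCat.of A A ∈ 𝒳) :
    ModuleCat.of (Localization S) (Localization S) ∈ addLocal S 𝒳 := by
  let e := (IsLocalizedModule.iso S
    (Algebra.linearMap A (Localization S))).extendScalarsOfIsLocalization S (Localization S)
  exact addLocal_of_retract e.comp_symm (localizedModule_mem_addLocal hA)

lemma IsExtClosed.isExtClosed_addLocal [IsNoetherianRing A]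
    (h : IsExtClosed A 𝒳) (hfg : ∀ X ∈ 𝒳, Module.Finite A X) :
    IsExtClosed (Localization S) (addLocal S 𝒳) := by
  refine ⟨fun M N ⟨e⟩ hM => addLocal_of_retract e.comp_symm hM,
    fun M N hMN => addLocal_of_retract (LinearMap.fst_comp_inl ..) hMN, ?_⟩
  rintro L M N f g hs ⟨X, hX, i, r, hr⟩ ⟨Z, hZ, i', r', hr'⟩
  have := hfg Z hZ
  obtain ⟨N', _, _, f', g', hs'⟩ := exists_isSES_of_retract hs hr hr'
  obtain ⟨W, _, _, _, _, hW, ⟨e⟩⟩ := exists_isSES_localizedModule_equiv hs'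
  have hM : ModuleCat.of (Localization S) (M × N') ∈ addLocal S 𝒳 :=
    addLocal_of_retract e.comp_symm (localizedModule_mem_addLocal (h.mem_of_isSES hW hX hZ))
  exact addLocal_of_retract (LinearMap.fst_comp_inl ..) hM

lemma IsResolving.isResolving_addLocal [IsNoetherianRing A] (h : IsResolving A 𝒳) :
    IsResolving (Localization S) (addLocal S 𝒳) := by
  have hext : IsExtClosed (Localization S) (addLocal S 𝒳) :=
    h.isExtClosed.isExtClosed_addLocal h.fg
  have hfg (N) (hN : N ∈ addLocal S 𝒳) : Module.Finite (Localization S) N := by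
    obtain ⟨X, hX, i, r, hr⟩ := hN
    have := h.fg X hX
    exact Module.Finite.of_surjective r (LinearMap.surjective_of_comp_eq_id _ _ hr)
  refine hext.isResolving hfg (self_mem_addLocal (h.of_projective_mem A)) fun N hN => ?_
  have := hfg N hN
  obtain ⟨X, hX, i, r, hr⟩ := hN
  have := h.fg X hX
  obtain ⟨m, ρ, hρ⟩ := Module.Finite.exists_fin' (Localization S) N
  obtain ⟨n, π, hπ⟩ := Module.Finite.exists_fin' A X
  have hπS := LocalizedModule.map_surjective S π hπ
  have hker_π : ModuleCat.of _ (LinearMap.ker (LocalizedModule.map S π)) ∈ addLocal S 𝒳 :=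
    hext.mem_of_equiv ((isSES_ker_subtype hπ).localized S).kerEquiv
      (localizedModule_mem_addLocal (h.ker_mem_of_projective hπ hX))
  have hker_r : ModuleCat.of _ (LinearMap.ker r) ∈ addLocal S 𝒳 :=
    hext.mem_of_prod (hext.mem_of_equiv ((retractEquiv hr).trans (LinearEquiv.prodComm _ _ _))
      (localizedModule_mem_addLocal hX))
  exact ⟨m, ρ, hρ, hext.ker_mem (π := r ∘ₗ LocalizedModule.map S π) hρ
    (hext.of_projective_mem (self_mem_addLocal (h.of_projective_mem A)) _)
    ((LinearMap.surjective_of_comp_eq_id _ _ hr).comp hπS)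
    (hext.mem_of_isSES (isSES_ker_comp _ hπS r) hker_π hker_r)⟩

end AddLocal

section ConcentratedModel

variable {A : Type u} [CommRing A] {M X Y : Type u} [AddCommGroup M] [Module A M]
  [AddCommGroup X] [Module A X] [AddCommGroup Y] [Module A Y] {I I' : Ideal A}
  {p : PrimeSpectrum A} {j : ℕ}

/-- `X` is a model of `M` concentrated on the closed set `V(I)`: it lies in every resolving
subcategory containing `M`, has the same local projective dimensions as `M` on `V(I)`, and is
locally projective off `V(I)`, which is encoded through its stable annihilator. -/
structure IsConcentratedModel (I : Ideal A) (M X : Type u) [AddCommGroup M] [Module A M]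
    [AddCommGroup X] [Module A X] : Prop where
  mem {𝒳 : Set (ModuleCat.{u} A)} : IsResolving A 𝒳 → ModuleCat.of A M ∈ 𝒳 → ModuleCat.of A X ∈ 𝒳
  localPdLE_iff {p : PrimeSpectrum A} (hp : I ≤ p.asIdeal) (j : ℕ) :
    LocalPdLE p j X ↔ LocalPdLE p j M
  sup_le : (stableAnnihilator A M).radical ⊔ I ≤ (stableAnnihilator A X).radical

lemma IsConcentratedModel.trans (hX : IsConcentratedModel I M X)
    (hY : IsConcentratedModel I' X Y) : IsConcentratedModel (I ⊔ I') M Y where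
  mem h hM := hY.mem h (hX.mem h hM)
  localPdLE_iff hp j := (hY.localPdLE_iff (le_sup_right.trans hp) j).trans
    (hX.localPdLE_iff (le_sup_left.trans hp) j)
  sup_le := by
    rw [← sup_assoc]
    exact (sup_le_sup_right hX.sup_le I').trans hY.sup_le

lemma IsConcentratedModel.localPdLE [IsNoetherianRing A] [Module.Finite A X]
    (hX : IsConcentratedModel I M X) (hp : ¬ I ≤ p.asIdeal) : LocalPdLE p j X :=
  .mono j.zero_le <| localPdLE_zero_iff.2 fun hle =>
    hp (le_sup_right.trans (hX.sup_le.trans (p.2.radical_le_iff.2 hle)))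

lemma isConcentratedModel_pullbackSMul [IsNoetherianRing A] {F : Type u} [AddCommGroup F]
    [Module A F] [Module.Finite A F] [Module.Projective A F] {π : F →ₗ[A] M}
    (hπ : Function.Surjective π) (x : A) :
    IsConcentratedModel (Ideal.span {x}) M (pullbackSMul π x) where
  mem h hM := h.pullbackSMul_mem hπ x hM
  localPdLE_iff hp _ :=
    ⟨.of_pullbackSMul hπ ((Ideal.span_singleton_le_iff_mem _).1 hp), .pullbackSMul hπ x⟩
  sup_le := radical_stableAnnihilator_sup_span_le hπ x

lemma exists_isConcentratedModel [IsNoetherianRing A] (I : Ideal A) (M : Type u) [AddCommGroup M]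
    [Module A M] [Module.Finite A M] :
    ∃ X : ModuleCat.{u} A, Module.Finite A X ∧ IsConcentratedModel I M X := by
  induction I, IsNoetherian.noetherian I using Submodule.fg_induction generalizing M with
  | singleton x =>
    obtain ⟨n, π, hπ⟩ := Module.Finite.exists_fin' A M
    exact ⟨.of A (pullbackSMul π x), inferInstance, isConcentratedModel_pullbackSMul hπ x⟩
  | sup I I' _ _ ih ih' =>
    obtain ⟨X, _, hX⟩ := ih M
    obtain ⟨Y, hfin, hY⟩ := ih' X
    exact ⟨Y, hfin, hX.trans hY⟩

end ConcentratedModel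

section Grade

open RingTheory.Sequence

variable {A : Type u} [CommRing A]

/-- The quotient of `A` by the ideal generated by a sequence, in the form used by the definition of
a weakly regular sequence. -/
abbrev SequenceQuotient (ys : List A) : Type u := A ⧸ (Ideal.ofList ys • ⊤ : Submodule A A)

lemma nonempty_localizedModule_sequenceQuotient_equiv (S : Submonoid A) (ys : List A) :
    Nonempty (LocalizedModule S (SequenceQuotient ys) ≃ₗ[Localization S]
      SequenceQuotient (ys.map (algebraMap A (Localization S)))) := by
  let N : Submodule A A := Ideal.ofList ys • ⊤
  let e := IsLocalizedModule.iso S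
    (N.toLocalizedQuotient' (Localization S) S (Algebra.linearMap A (Localization S)))
  have hN : N.localized' (Localization S) S (Algebra.linearMap A (Localization S)) =
      Ideal.ofList (ys.map (algebraMap A (Localization S))) • ⊤ := by
    rw [smul_eq_mul, Ideal.mul_top, ← Ideal.map_ofList, ← Ideal.localized'_eq_map _ S]
    exact congrArg _ (Ideal.mul_top _)
  exact ⟨e.extendScalarsOfIsLocalization S (Localization S) ≪≫ₗ Submodule.quotEquivOfEq _ _ hN⟩

lemma pdLE_sequenceQuotient_iff [IsNoetherianRing A] [IsLocalRing A] {ys : List A}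
    (hmem : ∀ y ∈ ys, y ∈ IsLocalRing.maximalIdeal A) (hreg : IsWeaklyRegular A ys) (j : ℕ) :
    PdLE A j (SequenceQuotient ys) ↔ ys.length ≤ j := by
  have hpd : projectiveDimension (ModuleCat.of A (SequenceQuotient ys)) = ys.length := by
    have h := ModuleCat.projectiveDimension_quotient_eq_add_length_of_isWeaklyRegular
      (ModuleCat.of A A) ys hreg hmem
    rwa [ModuleCat.projectiveDimension_eq_zero_of_projective (ModuleCat.of A A), zero_add] at h
  rw [PdLE, ← projectiveDimension_le_iff, hpd]
  norm_cast

lemma localPdLE_sequenceQuotient_iff [IsNoetherianRing A] {p : PrimeSpectrum A} {ys : List A}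
    (hmem : ∀ y ∈ ys, y ∈ p.asIdeal) (hreg : IsWeaklyRegular A ys) (j : ℕ) :
    LocalPdLE p j (SequenceQuotient ys) ↔ ys.length ≤ j := by
  obtain ⟨e⟩ := nonempty_localizedModule_sequenceQuotient_equiv p.asIdeal.primeCompl ys
  have hmem' : ∀ y ∈ ys.map (algebraMap A (Localization.AtPrime p.asIdeal)),
      y ∈ IsLocalRing.maximalIdeal (Localization.AtPrime p.asIdeal) := List.forall_mem_map.2
    fun y hy => (IsLocalization.AtPrime.to_map_mem_maximal_iff _ p.asIdeal y).2 (hmem y hy)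
  have h := pdLE_sequenceQuotient_iff hmem'
    (hreg.of_isLocalization (Localization.AtPrime p.asIdeal) p.asIdeal.primeCompl) j
  rw [List.length_map] at h
  exact .trans ⟨.of_equiv e, .of_equiv e.symm⟩ h

section Depth

variable {M : Type u} [AddCommGroup M] [Module A M] {I : Ideal A} {ys : List A}

lemma length_le_depthE (hmem : ∀ y ∈ ys, y ∈ I) (hreg : IsWeaklyRegular M ys) :
    (ys.length : ℕ∞) ≤ depthE A I M :=
  le_sSup ⟨ys, hmem, hreg, rfl⟩

lemma exists_isWeaklyRegular_length_eq {n : ℕ} (hn : (n : ℕ∞) ≤ depthE A I M) :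
    ∃ ys : List A, (∀ y ∈ ys, y ∈ I) ∧ IsWeaklyRegular M ys ∧ ys.length = n := by
  cases n with
  | zero => exact ⟨[], by simp, by simp, rfl⟩
  | succ n =>
    have hlt : (n : ℕ∞) < depthE A I M := (Nat.cast_lt.2 n.lt_succ_self).trans_le hn
    obtain ⟨_, ⟨ys, hmem, hreg, rfl⟩, hlen⟩ := lt_sSup_iff.1 hlt
    rw [← List.take_append_drop (n + 1) ys, isWeaklyRegular_append_iff] at hreg
    exact ⟨ys.take (n + 1), fun y hy => hmem y (List.mem_of_mem_take hy), hreg.1,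
      List.length_take_of_le (Nat.cast_lt.1 hlen)⟩

lemma not_isSMulRegular_of_depthE_eq_length (hmem : ∀ y ∈ ys, y ∈ I) (hreg : IsWeaklyRegular M ys)
    (hdepth : depthE A I M = ys.length) {x : A} (hx : x ∈ I) :
    ¬ IsSMulRegular (M ⧸ (Ideal.ofList ys • ⊤ : Submodule A M)) x := fun h => by
  have hle := length_le_depthE (M := M) (ys := ys ++ [x])
    (by simpa [or_imp, forall_and] using ⟨hmem, hx⟩)
    ((isWeaklyRegular_append_iff ..).2 ⟨hreg, (isWeaklyRegular_singleton_iff ..).2 h⟩)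
  rw [hdepth, Nat.cast_le, List.length_append, List.length_singleton] at hle
  lia

end Depth

lemma exists_mem_associatedPrimes_le [IsNoetherianRing A] {M : Type u} [AddCommGroup M] [Module A M]
    [Module.Finite A M] {I : Ideal A} (h : ∀ x ∈ I, ¬ IsSMulRegular M x) :
    ∃ q ∈ associatedPrimes A M, I ≤ q := by
  refine (Ideal.subset_union_prime_finite (associatedPrimes.finite A M) (f := id) ⊥ ⊥
    fun q hq _ _ => hq.1).1 ?_
  simp only [id, biUnion_associatedPrimes_eq_compl_regular]
  exact h

lemma gradeE_le_of_isIteratedRegular [IsNoetherianRing A] {p : PrimeSpectrum A} {d : ℕ}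
    (hd : IsIteratedRegular d (Localization.AtPrime p.asIdeal)) : gradeE A p.asIdeal ≤ d := by
  refine sSup_le ?_
  rintro _ ⟨ys, hmem, hreg, rfl⟩
  exact Nat.cast_le.2 ((localPdLE_sequenceQuotient_iff hmem hreg d).1 (hd.pdLE _))

lemma IsIteratedRegular.le_of_mem_associatedPrimes {q : PrimeSpectrum A}
    {d j : ℕ} (hd : IsIteratedRegular d (Localization.AtPrime q.asIdeal)) {M : Type u}
    [AddCommGroup M] [Module A M] [Module.Finite A M] (hq : q.asIdeal ∈ associatedPrimes A M)
    (hM : LocalPdLE q j M) : d ≤ j := by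
  by_contra! hlt
  have hN := hd.isNoetherianRing
  obtain ⟨hprime, y, hy⟩ := isAssociatedPrime_iff.1
    (Module.associatedPrimes.mem_associatedPrimes_atPrime_of_mem_associatedPrimes hq)
  have hy0 : y = 0 := hd.eq_zero_of_maximalIdeal_smul_eq_zero hlt hM fun t ht => by
    simpa [hy, Submodule.mem_colon_singleton] using ht
  refine hprime.ne_top (hy.trans ?_)
  simp [hy0]

lemma exists_gradeE_eq_forall_localPdLE [IsNoetherianRing A]
    (hreg : ∀ p : PrimeSpectrum A, IsRegLocalRing (Localization.AtPrime p.asIdeal))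
    (p : PrimeSpectrum A) : ∃ n : ℕ, gradeE A p.asIdeal = n ∧
      ∀ (M : Type u) [AddCommGroup M] [Module A M] [Module.Finite A M], LocalPdLE p n M := by
  obtain ⟨d, hd⟩ := (hreg p).exists_isIteratedRegular
  lift gradeE A p.asIdeal to ℕ using
    ((gradeE_le_of_isIteratedRegular hd).trans_lt (ENat.natCast_lt_top d)).ne with n hn
  obtain ⟨ys, hmem, hys, rfl⟩ := exists_isWeaklyRegular_length_eq hn.le
  obtain ⟨q, hq, hpq⟩ := exists_mem_associatedPrimes_le fun x hx =>
    not_isSMulRegular_of_depthE_eq_length hmem hys hn.symm hx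
  let q' : PrimeSpectrum A := ⟨q, hq.1⟩
  obtain ⟨D, hD⟩ := (hreg q').exists_isIteratedRegular
  have hDle : D ≤ ys.length := hD.le_of_mem_associatedPrimes hq
    ((localPdLE_sequenceQuotient_iff (fun y hy => hpq (hmem y hy)) hys _).2 le_rfl)
  exact ⟨ys.length, rfl, fun M _ _ _ => .of_le (q := q') hpq (.mono hDle (hD.pdLE _))⟩

end Grade

section Membership

variable {A : Type u} [CommRing A] [IsNoetherianRing A] {𝒳 : Set (ModuleCat.{u} A)}
  {p : PrimeSpectrum A} {M : Type u} [AddCommGroup M] [Module A M]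

omit [IsNoetherianRing A] in
lemma freeOnPuncturedSpectrum_localizedModule
    (h : IsLocalRing.maximalIdeal (Localization.AtPrime p.asIdeal) ≤ ((stableAnnihilator A M).map
      (algebraMap A (Localization.AtPrime p.asIdeal))).radical) :
    FreeOnPuncturedSpectrum (Localization.AtPrime p.asIdeal)
      (LocalizedModule p.asIdeal.primeCompl M) :=
  h.trans <| Ideal.radical_mono <| Ideal.map_le_iff_le_comap.2 fun _ ht =>
    algebraMap_mem_stableAnnihilator p.asIdeal.primeCompl ht

lemma IsResolving.exists_sMulFactors_of_mem_minimalPrimes (h : IsResolving A 𝒳)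
    (hreg : IsRegLocalRing (Localization.AtPrime p.asIdeal)) [Module.Finite A M]
    (hp : p.asIdeal ∈ (stableAnnihilator A M).minimalPrimes) {X : ModuleCat.{u} A} (hX : X ∈ 𝒳)
    (hXM : ∀ j, LocalPdLE p j X → LocalPdLE p j M) :
    ∃ t ∉ p.asIdeal, ∃ X' ∈ 𝒳, SMulFactors t M X' := by
  have := h.finite hX
  obtain ⟨d, hd⟩ := hreg.exists_isIteratedRegular
  obtain ⟨Y, _, hY⟩ := exists_isConcentratedModel p.asIdeal X
  have hmap := IsLocalization.AtPrime.map_eq_maximalIdeal p.asIdeal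
    (Localization.AtPrime p.asIdeal)
  have hYfree := freeOnPuncturedSpectrum_localizedModule (p := p) (M := Y) <| hmap.ge.trans <|
    (Ideal.map_mono (le_sup_right.trans hY.sup_le)).trans (Ideal.map_radical_le _)
  have hMfree := freeOnPuncturedSpectrum_localizedModule (p := p) (M := M) <| hmap.ge.trans
    (IsLocalization.AtPrime.radical_map_of_mem_minimalPrimes _ p.asIdeal _ hp).ge
  obtain ⟨X', hX', i, r, hr⟩ := hd.pdDeterminesResolving _ h.isResolving_addLocal _ _
    (localizedModule_mem_addLocal (hY.mem h hX)) hYfree hMfree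
    fun j hj => hXM j ((hY.localPdLE_iff le_rfl j).1 hj)
  have := h.finite hX'
  obtain ⟨t, ht, hfac⟩ := exists_sMulFactors_of_localizedModule_retract p.asIdeal.primeCompl hr
  exact ⟨t, ht, X', hX', hfac⟩

lemma IsResolving.mem_of_forall_localPdLE (h : IsResolving A 𝒳)
    (hreg : ∀ p : PrimeSpectrum A, IsRegLocalRing (Localization.AtPrime p.asIdeal))
    [Module.Finite A M]
    (hM : ∀ p : PrimeSpectrum A, ∃ X ∈ 𝒳, ∀ j, LocalPdLE p j X → LocalPdLE p j M) :
    ModuleCat.of A M ∈ 𝒳 := by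
  induction hI : (stableAnnihilator A M).radical using WellFoundedGT.induction generalizing M with
  | ind I ih =>
  subst hI
  by_cases htop : stableAnnihilator A M = ⊤
  · have := stableAnnihilator_eq_top_iff.1 htop
    exact h.of_projective_mem M
  obtain ⟨p, hp⟩ := (stableAnnihilator A M).nonempty_minimalPrimes htop
  obtain ⟨X, hX, hXM⟩ := hM ⟨p, hp.1.1⟩
  obtain ⟨t, ht, X', hX', hfac⟩ :=
    h.exists_sMulFactors_of_mem_minimalPrimes (hreg _) hp hX hXM
  obtain ⟨n, π, hπ⟩ := Module.Finite.exists_fin' A M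
  have hle := radical_stableAnnihilator_sup_span_le hπ t
  have hlt : (stableAnnihilator A M).radical < (stableAnnihilator A (pullbackSMul π t)).radical :=
    (le_sup_left.trans hle).lt_of_not_ge fun hge => ht <|
      hp.1.1.radical_le_iff.2 hp.1.2 (hge (hle (Ideal.mem_sup_right
        (Ideal.mem_span_singleton_self t))))
  refine h.isExtClosed.mem_of_pullbackSMul_mem hπ hX' hfac (ih _ hlt (fun q => ?_) rfl)
  obtain ⟨Z, hZ, hZM⟩ := hM q
  exact ⟨Z, hZ, fun j hj => (hZM j hj).pullbackSMul hπ t⟩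

end Membership

section Classification

variable {A : Type u} [CommRing A] {𝒳 : Set (ModuleCat.{u} A)} {p : PrimeSpectrum A}

/-- `n` is the largest local projective dimension at `p` of a module in `𝒳`: it bounds all of them,
and some member has none smaller. -/
structure IsMaxLocalPd (𝒳 : Set (ModuleCat.{u} A)) (p : PrimeSpectrum A) (n : ℕ) : Prop where
  localPdLE {X : ModuleCat.{u} A} (hX : X ∈ 𝒳) : LocalPdLE p n X
  exists_le : ∃ X ∈ 𝒳, ∀ j, LocalPdLE p j X → n ≤ j

lemma IsResolving.exists_isMaxLocalPd (h : IsResolving A 𝒳) {N : ℕ}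
    (hN : ∀ X ∈ 𝒳, LocalPdLE p N X) : ∃ n ≤ N, IsMaxLocalPd 𝒳 p n := by
  classical
  have hex : ∃ n, ∀ X ∈ 𝒳, LocalPdLE p n X := ⟨N, hN⟩
  refine ⟨Nat.find hex, Nat.find_min' hex hN, fun hX => Nat.find_spec hex _ hX, ?_⟩
  cases hn : Nat.find hex with
  | zero => exact ⟨_, h.of_projective_mem A, fun j _ => j.zero_le⟩
  | succ n =>
    obtain ⟨X, hX, hnX⟩ : ∃ X ∈ 𝒳, ¬ LocalPdLE p n X := by
      simpa using Nat.find_min hex (m := n) (by lia)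
    exact ⟨X, hX, fun j hj => not_lt.1 fun hlt => hnX (hj.mono (Nat.le_of_lt_succ hlt))⟩

lemma localPdim_self_nonneg : 0 ≤ localPdim A p (ModuleCat.of A A) := by
  refine le_sInf ?_
  rintro _ (⟨rfl, hsub⟩ | ⟨n, rfl, -⟩)
  · have hsub' : Subsingleton (LocalizedModule p.asIdeal.primeCompl A) := hsub
    have e := IsLocalizedModule.iso p.asIdeal.primeCompl
      (Algebra.linearMap A (Localization.AtPrime p.asIdeal))
    exact (not_subsingleton _ e.symm.toEquiv.subsingleton).elim
  · exact WithBot.coe_le_coe.2 zero_le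

lemma add_one_le_of_natCast_lt {n : ℕ} {w : WithBot ℕ∞} (h : ((n : ℕ∞) : WithBot ℕ∞) < w) :
    (((n + 1 : ℕ) : ℕ∞) : WithBot ℕ∞) ≤ w := by
  cases w with
  | bot => exact (not_lt_bot h).elim
  | coe w =>
    rw [WithBot.coe_le_coe, Nat.cast_add_one]
    exact Order.add_one_le_of_lt (WithBot.coe_lt_coe.1 h)

variable [IsNoetherianRing A]

lemma IsMaxLocalPd.eq_iSup_localPdim {n : ℕ} (h : IsMaxLocalPd 𝒳 p n) (h𝒳 : IsResolving A 𝒳) :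
    ((n : ℕ∞) : WithBot ℕ∞) = ⨆ X ∈ 𝒳, localPdim A p X := by
  refine le_antisymm ?_ (iSup₂_le fun X hX => ?_)
  · obtain ⟨X, hX, hXn⟩ := h.exists_le
    have := h𝒳.finite hX
    cases n with
    | zero => exact localPdim_self_nonneg.trans (le_iSup₂_of_le _ (h𝒳.of_projective_mem A) le_rfl)
    | succ n =>
      refine le_iSup₂_of_le X hX <| add_one_le_of_natCast_lt <| not_le.1 fun hle =>
        n.lt_irrefl (hXn n ((localPdim_le_iff p n X).1 hle))
  · have := h𝒳.finite hX
    exact (localPdim_le_iff p n X).2 (h.localPdLE hX)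

lemma mem_psiPd_iff {f : PrimeSpectrum A → ℕ} {M : ModuleCat.{u} A} :
    M ∈ psiPd A f ↔ Module.Finite A M ∧ ∀ p, LocalPdLE p (f p) M :=
  and_congr_right fun _ => forall_congr' fun p => localPdim_le_iff p (f p) M

lemma isResolving_psiPd (f : PrimeSpectrum A → ℕ) : IsResolving A (psiPd A f) where
  fg M hM := hM.1
  iso_closed M N := by
    rintro ⟨e⟩ hM
    obtain ⟨_, hM⟩ := mem_psiPd_iff.1 hM
    exact mem_psiPd_iff.2 ⟨.equiv e, fun p => .of_retract e.comp_symm (hM p)⟩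
  proj_mem M hfin _ := mem_psiPd_iff.2 ⟨hfin, fun _ => .of_projective⟩
  summand_closed M N hMN := by
    obtain ⟨hfin, hMN⟩ := mem_psiPd_iff.1 hMN
    have : Module.Finite A (M × N) := hfin
    exact mem_psiPd_iff.2 ⟨.of_surjective (LinearMap.fst A M N) Prod.fst_surjective,
      fun p => .of_retract (LinearMap.fst_comp_inl ..) (hMN p)⟩
  ext_closed K P M i g hs hK hM := by
    obtain ⟨_, hK⟩ := mem_psiPd_iff.1 hK
    obtain ⟨_, hM⟩ := mem_psiPd_iff.1 hM
    exact mem_psiPd_iff.2 ⟨.of_exact hs.exact hs.2.1, fun p => .middle hs (hK p) (hM p)⟩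
  syzygy_closed K P M i g hs hK _ _ hM :=
    mem_psiPd_iff.2 ⟨hK, fun p => .left hs .of_projective
      (((mem_psiPd_iff.1 hM).2 p).mono (Nat.le_succ _))⟩

lemma GradeConsistent.isMaxLocalPd_psiPd {f : PrimeSpectrum A → ℕ} (hf : GradeConsistent A f)
    (p : PrimeSpectrum A) : IsMaxLocalPd (psiPd A f) p (f p) := by
  refine ⟨fun hX => (mem_psiPd_iff.1 hX).2 p, ?_⟩
  obtain ⟨ys, hmem, hreg, hlen⟩ := exists_isWeaklyRegular_length_eq (hf.1 p)
  obtain ⟨X, hfin, hX⟩ := exists_isConcentratedModel p.asIdeal (SequenceQuotient ys)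
  have hpd {q : PrimeSpectrum A} (hpq : p.asIdeal ≤ q.asIdeal) (j : ℕ) :
      LocalPdLE q j X ↔ f p ≤ j := by
    rw [hX.localPdLE_iff hpq, localPdLE_sequenceQuotient_iff (fun y hy => hpq (hmem y hy)) hreg,
      hlen]
  refine ⟨X, mem_psiPd_iff.2 ⟨hfin, fun q => ?_⟩, fun j hj => (hpd le_rfl j).1 hj⟩
  by_cases hpq : p.asIdeal ≤ q.asIdeal
  · exact (hpd hpq _).2 (hf.2 p q hpq)
  · exact hX.localPdLE hpq

lemma IsResolving.gradeConsistent_of_isMaxLocalPd (h : IsResolving A 𝒳) {f : PrimeSpectrum A → ℕ}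
    (hf : ∀ p, IsMaxLocalPd 𝒳 p (f p)) (hgrade : ∀ p, (f p : ℕ∞) ≤ gradeE A p.asIdeal) :
    GradeConsistent A f := by
  refine ⟨hgrade, fun p q hpq => ?_⟩
  obtain ⟨X, hX, hXp⟩ := (hf p).exists_le
  have := h.finite hX
  exact hXp _ (((hf q).localPdLE hX).of_le hpq)

lemma IsResolving.psiPd_eq_of_isMaxLocalPd (h : IsResolving A 𝒳)
    (hreg : ∀ p : PrimeSpectrum A, IsRegLocalRing (Localization.AtPrime p.asIdeal))
    {f : PrimeSpectrum A → ℕ} (hf : ∀ p, IsMaxLocalPd 𝒳 p (f p)) : psiPd A f = 𝒳 := by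
  ext M
  refine mem_psiPd_iff.trans ⟨fun ⟨_, hM⟩ => ?_, fun hM => ⟨h.finite hM, fun p => ?_⟩⟩
  · refine h.mem_of_forall_localPdLE hreg fun p => ?_
    obtain ⟨X, hX, hXp⟩ := (hf p).exists_le
    exact ⟨X, hX, fun j hj => (hM p).mono (hXp j hj)⟩
  · exact (hf p).localPdLE hM

lemma IsResolving.exists_isMaxLocalPd_le_gradeE (h : IsResolving A 𝒳)
    (hreg : ∀ p : PrimeSpectrum A, IsRegLocalRing (Localization.AtPrime p.asIdeal))
    (p : PrimeSpectrum A) : ∃ n : ℕ, (n : ℕ∞) ≤ gradeE A p.asIdeal ∧ IsMaxLocalPd 𝒳 p n := by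
  obtain ⟨N, hN, hpd⟩ := exists_gradeE_eq_forall_localPdLE hreg p
  obtain ⟨n, hn, hmax⟩ := h.exists_isMaxLocalPd (p := p) (N := N) fun X hX =>
    have := h.finite hX
    hpd X
  exact ⟨n, hN ▸ Nat.cast_le.2 hn, hmax⟩

end Classification

/-- Corollary: over a regular ring, `φ` and `ψ` are mutually inverse bijections between
all resolving subcategories of `mod R` and the grade consistent functions on `Spec R`. -/
theorem regular_resolving_classification [IsNoetherianRing R]
    (hreg : ∀ p : PrimeSpectrum R, IsRegLocalRing (Localization.AtPrime p.asIdeal)) :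
    (∀ 𝒳 : Set (ModuleCat.{u} R), IsResolving R 𝒳 →
      ∃ f : PrimeSpectrum R → ℕ, GradeConsistent R f ∧
        (∀ p : PrimeSpectrum R,
          ((f p : ℕ∞) : WithBot ℕ∞) = ⨆ X ∈ 𝒳, localPdim R p X) ∧
        psiPd R f = 𝒳) ∧
    (∀ f : PrimeSpectrum R → ℕ, GradeConsistent R f →
      IsResolving R (psiPd R f) ∧
      (∀ p : PrimeSpectrum R,
        ((f p : ℕ∞) : WithBot ℕ∞) = ⨆ X ∈ psiPd R f, localPdim R p X)) := by
  refine ⟨fun 𝒳 h => ?_, fun f hf => ?_⟩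
  · choose f hgrade hmax using h.exists_isMaxLocalPd_le_gradeE hreg
    exact ⟨f, h.gradeConsistent_of_isMaxLocalPd hmax hgrade,
      fun p => (hmax p).eq_iSup_localPdim h, h.psiPd_eq_of_isMaxLocalPd hreg hmax⟩
  · have h := isResolving_psiPd f
    exact ⟨h, fun p => (hf.isMaxLocalPd_psiPd p).eq_iSup_localPdim h⟩

end ResolvPaper
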